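/- arXiv:2202.12846 — 2 statements merged into one kernel-verified Lean document; each statement's English description precedes it below -/
import Mathlib

section
/- Let σ : ℝ → ℝ be expressive and let (f_n) be a sequence of Boolean functions f_n : {±1}^n → {±1} with inputs uniform on {±1}^n. If INAL(f_n, σ) is negligible, then for every ε > 0 the cross-predictability CP(orb(f̄_n), U^N) is negligible, where N = n^{1+ε}, f̄_n is the N-extension of f_n, orb(f̄_n) denotes the uniform distribution on the orbit {f̄_n ∘ π : π ∈ S_N}, and U^N is the uniform distribution on {±1}^N. -/
open MeasureTheory ProbabilityTheory Filter Finset Asymptotics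
open scoped NNReal ENNReal

noncomputable section

/-- The ±1 value encoded by a Boolean bit. -/
def bsign (b : Bool) : ℝ := if b then 1 else -1

/-- Expectation over a uniformly random point of the Boolean cube `{±1}^n`. -/
def bExp (n : ℕ) (g : (Fin n → Bool) → ℝ) : ℝ :=
  (∑ x : Fin n → Bool, g x) / 2 ^ n

/-- A function on the Boolean cube is Boolean(-valued) if it takes values in `{±1}`. -/
def IsBooleanFn {n : ℕ} (f : (Fin n → Bool) → ℝ) : Prop := ∀ x, f x = 1 ∨ f x = -1

/-- Initialization distribution: the weights `w : ℝⁿ` and the bias `b` are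
iid `N(0, 1/n)` Gaussians. -/
def initMeasure (n : ℕ) : Measure ((Fin n → ℝ) × ℝ) :=
  (Measure.pi fun _ : Fin n => gaussianReal 0 (n : ℝ≥0)⁻¹).prod (gaussianReal 0 (n : ℝ≥0)⁻¹)

/-- Initial alignment `INAL(f, σ) = E_{w,b} [ (E_x [f(x) σ(wᵀx + b)])² ]`. -/
def INAL (n : ℕ) (f : (Fin n → Bool) → ℝ) (σ : ℝ → ℝ) : ℝ :=
  ∫ θ : (Fin n → ℝ) × ℝ,
    (bExp n fun x => f x * σ (∑ i, θ.1 i * bsign (x i) + θ.2)) ^ 2 ∂ initMeasure n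

/-- The `v`-Gaussian smoothing `Σ_v(t) = E_{Y ∼ N(0,v)} [σ(Y + t)]`. -/
def gsmooth (σ : ℝ → ℝ) (v : ℝ) (t : ℝ) : ℝ :=
  ∫ y, σ (y + t) ∂ gaussianReal 0 v.toNNReal

/-- `σ` is polynomially bounded: `|σ(x)| ≤ C |x|^c + C` for some `C, c > 0`. -/
def PolyBounded (σ : ℝ → ℝ) : Prop :=
  ∃ C : ℝ, 0 < C ∧ ∃ c : ℕ, 0 < c ∧ ∀ x : ℝ, |σ x| ≤ C * |x| ^ c + C

/-- `σ` is expressive: measurable, polynomially bounded, and its Gaussian smoothing has no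
two consecutive vanishing derivatives at `0`. -/
def Expressive (σ : ℝ → ℝ) : Prop :=
  Measurable σ ∧ PolyBounded σ ∧
    ∀ m : ℕ, iteratedDeriv m (gsmooth σ 1) 0 ≠ 0 ∨ iteratedDeriv (m + 1) (gsmooth σ 1) 0 ≠ 0

/-- A nonnegative sequence is negligible if it decays faster than any inverse polynomial. -/
def Negligible (g : ℕ → ℝ) : Prop :=
  ∀ c : ℕ, Tendsto (fun n : ℕ => (n : ℝ) ^ c * g n) atTop (nhds 0)

/-- Fourier character `M_S(x) = ∏_{i ∈ S} x_i`. -/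
def chi {n : ℕ} (S : Finset (Fin n)) (x : Fin n → Bool) : ℝ := ∏ i ∈ S, bsign (x i)

/-- Fourier coefficient `f̂(S) = E_x [f(x) M_S(x)]`. -/
def fourierCoef (n : ℕ) (f : (Fin n → Bool) → ℝ) (S : Finset (Fin n)) : ℝ :=
  bExp n fun x => f x * chi S x

/-- Fourier weight up to degree `k`: `W^{≤k}(f)`. -/
def weightLE (n k : ℕ) (f : (Fin n → Bool) → ℝ) : ℝ :=
  ∑ S ∈ Finset.univ.filter (fun S : Finset (Fin n) => S.card ≤ k), fourierCoef n f S ^ 2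

/-- Fourier weight strictly below degree `k`: `W^{<k}(f)`. -/
def weightLT (n k : ℕ) (f : (Fin n → Bool) → ℝ) : ℝ :=
  ∑ S ∈ Finset.univ.filter (fun S : Finset (Fin n) => S.card < k), fourierCoef n f S ^ 2

/-- The monomial `M_k(x) = ∏_{i=1}^k x_i`, viewed as a function on `{±1}^n`. -/
def monomial (n k : ℕ) : (Fin n → Bool) → ℝ :=
  fun x => ∏ i ∈ Finset.univ.filter (fun i : Fin n => (i : ℕ) < k), bsign (x i)

/-- The `N`-extension of `f : {±1}^n → ℝ` (for `n ≤ N`): ignore the last `N - n` coordinates. -/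
def extendFn (n N : ℕ) (f : (Fin n → Bool) → ℝ) : (Fin N → Bool) → ℝ :=
  fun x => f fun i => if h : (i : ℕ) < N then x ⟨i, h⟩ else false

/-- Cross-predictability of (the uniform distribution on) the orbit of `f` under coordinate
permutations, with uniform inputs: `CP(orb(f), U^N)`. -/
def orbitCP (N : ℕ) (f : (Fin N → Bool) → ℝ) : ℝ :=
  (∑ π : Equiv.Perm (Fin N), ∑ π' : Equiv.Perm (Fin N),
      (bExp N fun x => f (fun i => x (π i)) * f (fun i => x (π' i))) ^ 2) /
    (Fintype.card (Equiv.Perm (Fin N))) ^ 2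

/-- `N = n^{1+ε}` (rounded up). -/
def Ndim (ε : ℝ) (n : ℕ) : ℕ := ⌈(n : ℝ) ^ (1 + ε)⌉₊

lemma bsign_sq (b : Bool) : bsign b * bsign b = 1 := by cases b <;> simp [bsign]

lemma bsign_not (b : Bool) : bsign (!b) = - bsign b := by cases b <;> simp [bsign]

lemma chi_sum {n : ℕ} (x y : Fin n → Bool) :
    ∑ S : Finset (Fin n), chi S x * chi S y = if x = y then 2 ^ n else 0 := by
  have h1 : ∑ S : Finset (Fin n), chi S x * chi S y
      = ∏ i, (1 + bsign (x i) * bsign (y i)) := by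
    rw [Finset.prod_one_add]
    simp only [chi, Finset.prod_mul_distrib, Finset.powerset_univ]
  rw [h1]
  split_ifs with h
  · subst h
    simp only [bsign_sq]
    norm_num
  · obtain ⟨i, hi⟩ := Function.ne_iff.mp h
    apply Finset.prod_eq_zero (Finset.mem_univ i)
    revert hi
    cases x i <;> cases y i <;> simp [bsign]

lemma plancherel (n : ℕ) (F G : (Fin n → Bool) → ℝ) :
    bExp n (fun x => F x * G x) = ∑ S, fourierCoef n F S * fourierCoef n G S := by
  have h1 : ∀ S, fourierCoef n F S * fourierCoef n G S
      = (∑ x, ∑ y, F x * G y * (chi S x * chi S y)) / (2 ^ n * 2 ^ n) := by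
    intro S
    unfold fourierCoef bExp
    rw [div_mul_div_comm, Finset.sum_mul_sum]
    congr 1
    refine Finset.sum_congr rfl fun x _ => Finset.sum_congr rfl fun y _ => by ring
  simp_rw [h1]
  rw [← Finset.sum_div, Finset.sum_comm]
  have h2 : ∀ x, ∑ S, ∑ y, F x * G y * (chi S x * chi S y) = 2 ^ n * (F x * G x) := by
    intro x
    rw [Finset.sum_comm]
    simp_rw [← Finset.mul_sum, chi_sum]
    simp
    ring
  simp_rw [h2]
  rw [← Finset.mul_sum]
  unfold bExp
  rw [mul_div_mul_left _ _ (by positivity)]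

lemma bExp_comp {n N : ℕ} (ι : Fin n → Fin N) (hι : Function.Injective ι)
    (h : (Fin n → Bool) → ℝ) :
    bExp N (fun x => h (fun i => x (ι i))) = bExp n h := by
  classical
  have key : ∀ y : Fin n → Bool,
      ∑ x : Fin N → Bool, h (fun i => x (ι i)) =
      ∑ x : Fin N → Bool, h (fun i => xor (x (ι i)) (y i)) := by
    intro y
    let z : Fin N → Bool := Function.extend ι y (fun _ => false)
    have hz : ∀ i, z (ι i) = y i := fun i => hι.extend_apply _ _ _
    let e : (Fin N → Bool) ≃ (Fin N → Bool) :=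
      Function.Involutive.toPerm (fun x i => xor (x i) (z i)) (by
        intro x; funext i; simp)
    rw [← Equiv.sum_comp e]
    refine Finset.sum_congr rfl fun x _ => ?_
    congr 1
    funext i
    change xor (x (ι i)) (z (ι i)) = _
    rw [hz]
  have key2 : ∀ x : Fin N → Bool, ∑ y : Fin n → Bool, h (fun i => xor (x (ι i)) (y i))
      = ∑ y, h y := by
    intro x
    let e : (Fin n → Bool) ≃ (Fin n → Bool) :=
      Function.Involutive.toPerm (fun y i => xor (x (ι i)) (y i)) (by
        intro y; funext i; simp)
    exact Equiv.sum_comp e h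
  have h3 : (2:ℝ) ^ n * ∑ x : Fin N → Bool, h (fun i => x (ι i)) = 2 ^ N * ∑ y, h y := by
    have : ∑ y : Fin n → Bool, ∑ x : Fin N → Bool, h (fun i => x (ι i))
        = ∑ y : Fin n → Bool, ∑ x : Fin N → Bool, h (fun i => xor (x (ι i)) (y i)) :=
      Finset.sum_congr rfl fun y _ => key y
    rw [Finset.sum_comm (s := Finset.univ) (t := Finset.univ)
      (f := fun (y : Fin n → Bool) (x : Fin N → Bool) => h (fun i => xor (x (ι i)) (y i)))] at this
    simp_rw [key2] at this
    simpa using this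
  unfold bExp
  rw [div_eq_div_iff (by positivity) (by positivity)]
  linarith

lemma fc_zero {n N : ℕ} (ι : Fin n → Fin N)
    (f : (Fin n → Bool) → ℝ) (S : Finset (Fin N)) (i : Fin N) (hi : i ∈ S)
    (hr : i ∉ Set.range ι) :
    fourierCoef N (fun x => f (fun i => x (ι i))) S = 0 := by
  classical
  unfold fourierCoef bExp
  let e : (Fin N → Bool) ≃ (Fin N → Bool) :=
    Function.Involutive.toPerm (fun x => Function.update x i (!x i)) (by
      intro x; simp)
  have h1 := Equiv.sum_comp e (fun x : Fin N → Bool => f (fun i => x (ι i)) * chi S x)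
  have h2 : ∀ x, f (fun j => (e x) (ι j)) * chi S (e x)
      = - (f (fun j => x (ι j)) * chi S x) := by
    intro x
    have a : (fun j => (e x) (ι j)) = fun j => x (ι j) := by
      funext j
      change Function.update x i (!x i) (ι j) = _
      rw [Function.update_of_ne]
      intro h
      exact hr ⟨j, h⟩
    have b : chi S (e x) = - chi S x := by
      unfold chi
      rw [← Finset.mul_prod_erase _ _ hi, ← Finset.mul_prod_erase _ _ hi, ← neg_mul]
      congr 1
      · change bsign (Function.update x i (!x i) i) = _
        rw [Function.update_self, bsign_not]
      · refine Finset.prod_congr rfl fun j hj => ?_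
        change bsign (Function.update x i (!x i) j) = _
        rw [Function.update_of_ne (Finset.ne_of_mem_erase hj)]
    rw [a, b]; ring
  simp_rw [h2] at h1
  rw [Finset.sum_neg_distrib] at h1
  have : ∑ x : Fin N → Bool, f (fun i => x (ι i)) * chi S x = 0 := by linarith
  rw [this]; simp

lemma fc_sub {n N : ℕ} (ι : Fin n → Fin N) (hι : Function.Injective ι)
    (f : (Fin n → Bool) → ℝ) (S : Finset (Fin N)) (hr : ∀ i ∈ S, i ∈ Set.range ι) :
    ∃ T : Finset (Fin n), T.card = S.card ∧
    fourierCoef N (fun x => f (fun i => x (ι i))) S = fourierCoef n f T := by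
  classical
  refine ⟨S.preimage ι hι.injOn, ?_, ?_⟩
  · conv_rhs => rw [← Finset.image_preimage_of_bij (f := ι) (s := S) ⟨fun x hx => hx, hι.injOn, fun y hy => by
      obtain ⟨x, rfl⟩ := hr y hy
      exact ⟨x, hy, rfl⟩⟩]
    rw [Finset.card_image_of_injective _ hι]
  · unfold fourierCoef
    rw [← bExp_comp ι hι]
    congr 1
    funext x
    congr 1
    unfold chi
    rw [Finset.prod_preimage ι S hι.injOn (fun i => bsign (x i))]
    intro y hy hy2
    exact absurd (hr y hy) hy2

lemma fc_bound {n N : ℕ} (ι : Fin n → Fin N) (hι : Function.Injective ι)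
    (f : (Fin n → Bool) → ℝ) (S : Finset (Fin N)) (k : ℕ) (hS : S.card < k) (δ : ℝ) (hδ : 0 ≤ δ)
    (h : ∀ T : Finset (Fin n), T.card < k → fourierCoef n f T ^ 2 ≤ δ) :
    fourierCoef N (fun x => f (fun i => x (ι i))) S ^ 2 ≤ δ := by
  by_cases hr : ∀ i ∈ S, i ∈ Set.range ι
  · obtain ⟨T, hT, e⟩ := fc_sub ι hι f S hr
    rw [e]; exact h T (hT ▸ hS)
  · push Not at hr
    obtain ⟨i, hi, hr⟩ := hr
    rw [fc_zero ι f S i hi hr]; simpa using hδ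

lemma perm_count {N : ℕ} (A : Finset (Fin N)) (S : Finset (Fin N)) :
    ((Finset.univ.filter fun π : Equiv.Perm (Fin N) => ∀ i ∈ S, π i ∈ A).card : ℝ) * N ^ S.card
      ≤ A.card ^ S.card * Fintype.card (Equiv.Perm (Fin N)) := by
  classical
  induction S using Finset.induction_on with
  | empty => simp
  | insert i S hi ih =>
    set a : Finset (Fin N) → ℕ := fun S =>
      (Finset.univ.filter fun π : Equiv.Perm (Fin N) => ∀ i ∈ S, π i ∈ A).card with ha
    have hsw : ∀ j ∈ Sᶜ, a (insert j S) = a (insert i S) := by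
      intro j hj
      have hj : j ∉ S := by simpa using hj
      apply Finset.card_bij (fun π _ => π * Equiv.swap i j)
      · intro π hπ
        simp only [Finset.mem_filter, Finset.mem_univ, true_and, Finset.mem_insert,
          forall_eq_or_imp, Equiv.Perm.mul_apply, Equiv.swap_apply_left] at hπ ⊢
        refine ⟨hπ.1, fun l hl => ?_⟩
        rw [Equiv.swap_apply_of_ne_of_ne (by rintro rfl; exact hi hl) (by rintro rfl; exact hj hl)]
        exact hπ.2 l hl
      · intro π _ π' _ h
        exact mul_right_cancel h
      · intro π hπ
        refine ⟨π * Equiv.swap i j, ?_, by simp [mul_assoc]⟩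
        simp only [Finset.mem_filter, Finset.mem_univ, true_and, Finset.mem_insert,
          forall_eq_or_imp, Equiv.Perm.mul_apply, Equiv.swap_apply_right] at hπ ⊢
        refine ⟨hπ.1, fun l hl => ?_⟩
        rw [Equiv.swap_apply_of_ne_of_ne (by rintro rfl; exact hi hl) (by rintro rfl; exact hj hl)]
        exact hπ.2 l hl
    have hcount : a (insert i S) * (N - S.card) = a S * (A.card - S.card) := by
      have h1 : ∑ j ∈ Sᶜ, a (insert j S) = a (insert i S) * (N - S.card) := by
        rw [Finset.sum_congr rfl hsw, Finset.sum_const, Finset.card_compl, Fintype.card_fin,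
          smul_eq_mul, mul_comm]
      rw [← h1]
      simp only [ha, Finset.card_filter]
      rw [Finset.sum_comm, Finset.sum_mul]
      refine Finset.sum_congr rfl fun π _ => ?_
      split_ifs with h
      · rw [one_mul]
        have : ∀ j, (∀ l ∈ insert j S, π l ∈ A) ↔ π j ∈ A := by
          intro j; simp only [Finset.mem_insert, forall_eq_or_imp]; tauto
        simp_rw [this]
        rw [← Finset.card_filter]
        have e : (Finset.filter (fun j => π j ∈ A) Sᶜ) = (A.map π.symm.toEmbedding) \ S := by
          ext j
          simp only [Finset.mem_filter, Finset.mem_compl, Finset.mem_sdiff, Finset.mem_map_equiv,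
            Equiv.symm_symm]
          tauto
        rw [e, Finset.card_sdiff_of_subset, Finset.card_map]
        intro l hl
        rw [Finset.mem_map_equiv]
        simpa using h l hl
      · rw [zero_mul]
        apply Finset.sum_eq_zero
        intro j _
        rw [if_neg]
        intro h'
        exact h fun l hl => h' l (Finset.mem_insert_of_mem hl)
    have hAN : A.card ≤ N := by simpa using Finset.card_le_univ A
    have hSN : S.card < N := by
      have := Finset.card_le_univ (insert i S)
      rw [Finset.card_insert_of_notMem hi, Fintype.card_fin] at this
      omega
    have step : (a (insert i S) : ℝ) * N ≤ a S * A.card := by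
      by_cases hle : S.card ≤ A.card
      · have hc : (a (insert i S) : ℝ) * (N - S.card) = a S * (A.card - S.card) := by
          have := congrArg (Nat.cast (R := ℝ)) hcount
          push_cast [Nat.cast_sub hle, Nat.cast_sub hSN.le] at this
          exact this
        have hpos : (0:ℝ) < N - S.card := by
          rw [sub_pos]; exact_mod_cast hSN
        have hAN' : (A.card : ℝ) ≤ N := by exact_mod_cast hAN
        have hs0 : (0:ℝ) ≤ S.card := by positivity
        have ha0 : (0:ℝ) ≤ a S := by positivity
        refine le_of_mul_le_mul_right ?_ hpos
        calc (a (insert i S) : ℝ) * N * (N - S.card) = a S * ((A.card - S.card) * N) := by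
              rw [mul_right_comm, hc]; ring
          _ ≤ a S * (A.card * (N - S.card)) := by
              apply mul_le_mul_of_nonneg_left _ ha0
              nlinarith
          _ = _ := by ring
      · have : A.card - S.card = 0 := by omega
        rw [this, mul_zero] at hcount
        have h0 : a (insert i S) = 0 := by
          rcases Nat.mul_eq_zero.mp hcount with h | h
          · exact h
          · omega
        rw [h0]; simp; positivity
    rw [Finset.card_insert_of_notMem hi, pow_succ, pow_succ]
    calc (a (insert i S) : ℝ) * (N ^ S.card * N) = (a (insert i S) * N) * N ^ S.card := by ring
      _ ≤ a S * A.card * N ^ S.card := by gcongr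
      _ = (a S * N ^ S.card) * A.card := by ring
      _ ≤ (A.card ^ S.card * Fintype.card (Equiv.Perm (Fin N))) * A.card := by gcongr
      _ = _ := by ring

lemma parseval_one (n : ℕ) (F : (Fin n → Bool) → ℝ) (hF : ∀ x, F x = 1 ∨ F x = -1) :
    ∑ S, fourierCoef n F S ^ 2 = 1 := by
  have := plancherel n F F
  simp_rw [← pow_two] at this
  rw [← this]
  unfold bExp
  have : ∀ x, F x ^ 2 = 1 := fun x => by rcases hF x with h | h <;> rw [h] <;> norm_num
  simp [this]

lemma card_small (N k : ℕ) :
    ((Finset.univ.filter fun S : Finset (Fin N) => S.card < k).card : ℝ) ≤ (N + 1) ^ k := by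
  classical
  have : (Finset.univ.filter fun S : Finset (Fin N) => S.card < k) ⊆
      (Finset.univ : Finset (Fin k → Option (Fin N))).image
        (fun g => Finset.univ.filter fun i => ∃ j, g j = some i) := by
    intro S hS
    simp only [Finset.mem_filter, Finset.mem_univ, true_and] at hS
    simp only [Finset.mem_image, Finset.mem_univ, true_and]
    refine ⟨fun j => if h : (j : ℕ) < S.card then some (S.equivFin.symm ⟨j, h⟩ : Fin N) else none, ?_⟩
    ext i
    simp only [Finset.mem_filter, Finset.mem_univ, true_and]
    constructor
    · rintro ⟨j, hj⟩
      split_ifs at hj with h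
      · rw [← Option.some.inj hj]; exact Subtype.property _
    · intro hi
      have hlt := (S.equivFin ⟨i, hi⟩).2
      refine ⟨⟨(S.equivFin ⟨i, hi⟩ : ℕ), by omega⟩, ?_⟩
      simp
  have h2 := (Finset.card_le_card this).trans Finset.card_image_le
  rw [Finset.card_univ, Fintype.card_fun, Fintype.card_option, Fintype.card_fin,
    Fintype.card_fin] at h2
  exact_mod_cast h2

lemma orbitCP_bound {n N : ℕ} (hnN : n ≤ N) (hN : 0 < N) (f : (Fin n → Bool) → ℝ)
    (hf : IsBooleanFn f)
    (k : ℕ) (δ : ℝ) (hδ : 0 ≤ δ)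
    (h : ∀ T : Finset (Fin n), T.card < k → fourierCoef n f T ^ 2 ≤ δ) :
    orbitCP N (extendFn n N f) ≤ (N + 1) ^ k * δ + ((n : ℝ) / N) ^ k := by
  classical
  obtain ⟨M, hM⟩ : ∃ M : ℝ, M = ((Fintype.card (Equiv.Perm (Fin N)) : ℕ) : ℝ) := ⟨_, rfl⟩
  have hMpos : 0 < M := by rw [hM]; exact_mod_cast Fintype.card_pos
  let F : Equiv.Perm (Fin N) → (Fin N → Bool) → ℝ :=
    fun π x => f (fun i => x (π (Fin.castLE hnN i)))
  have hFe : ∀ π x, extendFn n N f (fun i => x (π i)) = F π x := by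
    intro π x
    simp only [extendFn, F]
    congr 1
    funext i
    rw [dif_pos (lt_of_lt_of_le i.2 hnN)]
    rfl
  have hinj : ∀ π : Equiv.Perm (Fin N), Function.Injective (fun i => π (Fin.castLE hnN i)) :=
    fun π => π.injective.comp (Fin.castLE_injective hnN)
  have hFb : ∀ π x, F π x = 1 ∨ F π x = -1 := fun π x => hf _
  let A : Finset (Fin N) := Finset.univ.image (Fin.castLE hnN)
  have hA : A.card = n := by
    rw [Finset.card_image_of_injective _ (Fin.castLE_injective hnN)]; simp
  have hz : ∀ (π' : Equiv.Perm (Fin N)) S, ¬ (∀ i ∈ S, π'⁻¹ i ∈ A) → fourierCoef N (F π') S = 0 := by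
    intro π' S hS
    push Not at hS
    obtain ⟨i, hi, hi'⟩ := hS
    apply fc_zero (fun i => π' (Fin.castLE hnN i)) f S i hi
    rintro ⟨j, hj⟩
    apply hi'
    simp only [A, Finset.mem_image, Finset.mem_univ, true_and]
    refine ⟨j, ?_⟩
    rw [← hj]; simp
  have hr1 : (n : ℝ) / N ≤ 1 := by
    apply div_le_one_of_le₀ _ (by positivity); exact_mod_cast hnN
  have hr0 : (0:ℝ) ≤ (n : ℝ) / N := by positivity
  have h1 : ∀ π π' : Equiv.Perm (Fin N), (bExp N fun x => extendFn n N f (fun i => x (π i)) * extendFn n N f (fun i => x (π' i))) ^ 2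
      ≤ ∑ S, fourierCoef N (F π) S ^ 2 * (if ∀ i ∈ S, π'⁻¹ i ∈ A then 1 else 0) := by
    intro π π'
    simp_rw [hFe]
    rw [plancherel]
    have e : ∀ S, fourierCoef N (F π) S * fourierCoef N (F π') S =
      (fourierCoef N (F π) S * (if ∀ i ∈ S, π'⁻¹ i ∈ A then 1 else 0)) * fourierCoef N (F π') S := by
      intro S
      split_ifs with hh
      · ring
      · rw [hz π' S hh]; ring
    rw [Finset.sum_congr rfl fun S _ => e S]
    refine (Finset.sum_mul_sq_le_sq_mul_sq _ _ _).trans ?_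
    rw [parseval_one N (F π') (hFb π'), mul_one]
    apply le_of_eq
    refine Finset.sum_congr rfl fun S _ => ?_
    split_ifs <;> ring
  have h2 : ∀ S : Finset (Fin N), ∑ π' : Equiv.Perm (Fin N), (if ∀ i ∈ S, π'⁻¹ i ∈ A then (1:ℝ) else 0)
      ≤ M * ((n : ℝ) / N) ^ S.card := by
    intro S
    refine le_trans (le_of_eq (Equiv.sum_comp (Equiv.inv (Equiv.Perm (Fin N)))
      (fun π' => if ∀ i ∈ S, π' i ∈ A then (1:ℝ) else 0))) ?_
    rw [Finset.sum_boole]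
    have := perm_count A S
    rw [hA] at this
    rw [div_pow, ← mul_div_assoc, le_div_iff₀ (by positivity), hM, mul_comm _ ((n : ℝ) ^ _)]
    convert this
  have h3 : ∀ π, ∑ S, fourierCoef N (F π) S ^ 2 * ((n : ℝ) / N) ^ S.card
      ≤ (N + 1) ^ k * δ + ((n : ℝ) / N) ^ k := by
    intro π
    have hs : ∀ S, fourierCoef N (F π) S ^ 2 * ((n : ℝ) / N) ^ S.card ≤
        (if S.card < k then δ else 0) + fourierCoef N (F π) S ^ 2 * ((n : ℝ) / N) ^ k := by
      intro S
      split_ifs with hk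
      · have := fc_bound (fun i => π (Fin.castLE hnN i)) (hinj π) f S k hk δ hδ h
        have h5 : fourierCoef N (F π) S ^ 2 * ((n : ℝ) / N) ^ S.card ≤ δ * 1 :=
          mul_le_mul this (pow_le_one₀ hr0 hr1) (by positivity) hδ
        have : 0 ≤ fourierCoef N (F π) S ^ 2 * ((n : ℝ) / N) ^ k := by positivity
        linarith
      · rw [zero_add]
        exact mul_le_mul_of_nonneg_left (pow_le_pow_of_le_one hr0 hr1 (by omega)) (by positivity)
    refine (Finset.sum_le_sum fun S _ => hs S).trans ?_
    rw [Finset.sum_add_distrib, ← Finset.sum_mul, parseval_one N (F π) (hFb π), one_mul,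
      ← Finset.sum_filter, Finset.sum_const, nsmul_eq_mul]
    have := card_small N k
    gcongr
  unfold orbitCP
  rw [← hM, div_le_iff₀ (by positivity)]
  calc _ ≤ ∑ π : Equiv.Perm (Fin N), ∑ π' : Equiv.Perm (Fin N),
        ∑ S, fourierCoef N (F π) S ^ 2 * (if ∀ i ∈ S, π'⁻¹ i ∈ A then 1 else 0) :=
        Finset.sum_le_sum fun π _ => Finset.sum_le_sum fun π' _ => h1 π π'
    _ ≤ ∑ π : Equiv.Perm (Fin N), M * ((N + 1) ^ k * δ + ((n : ℝ) / N) ^ k) := by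
        refine Finset.sum_le_sum fun π _ => ?_
        rw [Finset.sum_comm]
        simp_rw [← Finset.mul_sum]
        refine le_trans (Finset.sum_le_sum fun S _ =>
          mul_le_mul_of_nonneg_left (h2 S) (sq_nonneg _)) ?_
        refine le_trans (le_of_eq ?_) (mul_le_mul_of_nonneg_left (h3 π) hMpos.le)
        rw [Finset.mul_sum]
        refine Finset.sum_congr rfl fun S _ => by ring
    _ = _ := by
        rw [Finset.sum_const, nsmul_eq_mul, Finset.card_univ, ← hM]; ring

/-- measurable, polynomially bounded -/
def PB (u : ℝ → ℝ) : Prop :=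
  Measurable u ∧ ∃ C : ℝ, 0 ≤ C ∧ ∃ c : ℕ, ∀ x, |u x| ≤ C * (1 + |x|) ^ c

def RR (s : ℝ≥0) (e : ℕ) (u : ℝ → ℝ) (t : ℝ) : ℝ :=
  ∫ y, y ^ e * u (y + t) ∂ gaussianReal 0 s

lemma one_add_abs_add (a b : ℝ) : 1 + |a + b| ≤ (1 + |a|) * (1 + |b|) := by
  have := abs_add_le a b
  nlinarith [abs_nonneg a, abs_nonneg b, mul_nonneg (abs_nonneg a) (abs_nonneg b)]

lemma integ_pow (m : ℝ) (s : ℝ≥0) (c : ℕ) :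
    Integrable (fun y : ℝ => (1 + |y|) ^ c) (gaussianReal m s) := by
  have h1 : MemLp (fun y : ℝ => 1 + |y|) (c : ℝ≥0∞) (gaussianReal m s) := by
    have h2 : MemLp (fun y : ℝ => |y|) (c : ℝ≥0∞) (gaussianReal m s) :=
      (memLp_id_gaussianReal' (μ := m) (v := s) (c : ℝ≥0∞) (ENNReal.natCast_ne_top c)).norm
    have h3 : MemLp (fun _ : ℝ => (1:ℝ)) (c : ℝ≥0∞) (gaussianReal m s) := memLp_const 1
    exact h3.add h2
  have := h1.integrable_norm_pow'
  refine this.congr (Eventually.of_forall fun y => ?_)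
  simp only [Real.norm_eq_abs]
  rw [abs_of_nonneg (by positivity)]

lemma PB.bound {u : ℝ → ℝ} {C : ℝ} (hC : 0 ≤ C) {c : ℕ} (h : ∀ x, |u x| ≤ C * (1 + |x|) ^ c)
    (e : ℕ) (y t : ℝ) :
    |y ^ e * u (y + t)| ≤ C * (1 + |t|) ^ c * (1 + |y|) ^ (c + e) := by
  rw [abs_mul, abs_pow]
  have h1 : |y| ^ e ≤ (1 + |y|) ^ e := by gcongr; linarith
  have h2 : |u (y + t)| ≤ C * ((1 + |y|) * (1 + |t|)) ^ c := by
    refine (h _).trans ?_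
    gcongr
    exact one_add_abs_add y t
  calc _ ≤ (1 + |y|) ^ e * (C * ((1 + |y|) * (1 + |t|)) ^ c) :=
        mul_le_mul h1 h2 (abs_nonneg _) (by positivity)
    _ = _ := by rw [mul_pow, pow_add]; ring

lemma PB.integrable {u : ℝ → ℝ} (hu : PB u) (s : ℝ≥0) (e : ℕ) (t : ℝ) :
    Integrable (fun y => y ^ e * u (y + t)) (gaussianReal 0 s) := by
  obtain ⟨hm, C, hC, c, h⟩ := hu
  refine Integrable.mono' ((integ_pow 0 s (c + e)).const_mul (C * (1 + |t|) ^ c)) ?_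
    (Eventually.of_forall fun y => ?_)
  · exact Measurable.aestronglyMeasurable (by fun_prop)
  · exact PB.bound hC h e y t

lemma PB.RR {u : ℝ → ℝ} (hu : PB u) (s : ℝ≥0) (e : ℕ) : PB (RR s e u) := by
  obtain ⟨hm, C, hC, c, h⟩ := hu
  refine ⟨?_, C * ∫ y, (1 + |y|) ^ (c + e) ∂ gaussianReal 0 s, ?_, c, fun t => ?_⟩
  · have : StronglyMeasurable (fun p : ℝ × ℝ => p.2 ^ e * u (p.2 + p.1)) :=
      Measurable.stronglyMeasurable (by fun_prop)
    exact (this.integral_prod_right (ν := gaussianReal 0 s)).measurable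
  · exact mul_nonneg hC (integral_nonneg fun y => by positivity)
  · have h1 := norm_integral_le_of_norm_le (f := fun y => y ^ e * u (y + t)) ((integ_pow 0 s (c + e)).const_mul (C * (1 + |t|) ^ c))
      (Eventually.of_forall fun y => PB.bound hC h e y t)
    rw [integral_const_mul] at h1
    rw [Real.norm_eq_abs] at h1
    refine h1.trans (le_of_eq (by ring))

lemma RR_comm {u : ℝ → ℝ} (hu : PB u) (s s' : ℝ≥0) (e e' : ℕ) :
    RR s e (RR s' e' u) = RR s' e' (RR s e u) := by
  funext t
  obtain ⟨hm, C, hC, c, h⟩ := hu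
  unfold RR
  simp_rw [← integral_const_mul]
  rw [integral_integral_swap]
  · refine integral_congr_ae (Eventually.of_forall fun z => integral_congr_ae
      (Eventually.of_forall fun y => ?_))
    simp only
    rw [show z + (y + t) = y + (z + t) by ring]; ring
  · have hi := ((integ_pow 0 s (c + e)).mul_prod (integ_pow 0 s' (c + e'))).const_mul
      (C * (1 + |t|) ^ c)
    refine Integrable.mono' hi (Measurable.aestronglyMeasurable (by
      simp only [Function.uncurry_def]; fun_prop)) (Eventually.of_forall fun p => ?_)
    obtain ⟨y, z⟩ := p
    simp only [Function.uncurry_apply_pair]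
    rw [Real.norm_eq_abs, abs_mul]
    have h1 := PB.bound hC h e' z (y + t)
    have h2 : |y ^ e| ≤ (1 + |y|) ^ e := by rw [abs_pow]; gcongr; linarith
    calc _ ≤ (1 + |y|) ^ e * (C * ((1 + |y|) * (1 + |t|)) ^ c * (1 + |z|) ^ (c + e')) := by
          refine mul_le_mul h2 (h1.trans ?_) (abs_nonneg _) (by positivity)
          gcongr
          exact one_add_abs_add y t
      _ = _ := by rw [mul_pow, pow_add (1 + |y|)]; ring

lemma RR_add {u : ℝ → ℝ} (hu : PB u) (s s' : ℝ≥0) :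
    RR s 0 (RR s' 0 u) = RR (s + s') 0 u := by
  funext t
  have hc : gaussianReal 0 (s + s') = (gaussianReal 0 s) ∗ (gaussianReal 0 s') := by
    rw [gaussianReal_conv_gaussianReal]; simp
  have hi : Integrable (fun y => y ^ 0 * u (y + t)) ((gaussianReal 0 s) ∗ (gaussianReal 0 s')) := by
    rw [← hc]; exact hu.integrable _ 0 t
  unfold RR
  rw [hc, integral_conv hi]
  refine integral_congr_ae (Eventually.of_forall fun z => ?_)
  simp only [pow_zero, one_mul]
  refine integral_congr_ae (Eventually.of_forall fun y => ?_)
  simp only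
  congr 1; ring

lemma integ_vol (a : ℝ) {b : ℝ} (hb : 0 < b) (m : ℕ) :
    Integrable (fun y : ℝ => (1 + |y - a|) ^ m * Real.exp (-b * (y - a) ^ 2)) := by
  have h0 : Integrable (fun y : ℝ => (1 + |y|) ^ m * Real.exp (-b * y ^ 2)) := by
    have h1 := integ_pow 0 (1 / (2 * b)).toNNReal m
    have hv : (1 / (2 * b)).toNNReal ≠ 0 := by
      simp only [ne_eq, Real.toNNReal_eq_zero, not_le]; positivity
    rw [gaussianReal_of_var_ne_zero _ hv,
      integrable_withDensity_iff_integrable_smul' (measurable_gaussianPDF _ _)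
        (Eventually.of_forall fun _ => gaussianPDF_lt_top)] at h1
    simp only [toReal_gaussianPDF, gaussianPDFReal, smul_eq_mul,
      Real.coe_toNNReal _ (show 0 ≤ 1 / (2 * b) by positivity), sub_zero] at h1
    have h2 := h1.const_mul (Real.sqrt (2 * Real.pi * (1 / (2 * b))))
    refine h2.congr (Eventually.of_forall fun y => ?_)
    simp only
    have : Real.sqrt (2 * Real.pi * (1 / (2 * b))) ≠ 0 := by positivity
    rw [mul_assoc _⁻¹, mul_inv_cancel_left₀ this, mul_comm]
    congr 2
    field_simp
  exact h0.comp_sub_right a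

lemma RR_zero_vol {u : ℝ → ℝ} {s : ℝ≥0} (hs : s ≠ 0) (e : ℕ) (t : ℝ) :
    RR s e u t = ∫ y, (y - t) ^ e * u y * gaussianPDFReal 0 s (y - t) := by
  unfold RR
  rw [integral_gaussianReal_eq_integral_smul hs]
  rw [← integral_sub_right_eq_self _ t]
  refine integral_congr_ae (Eventually.of_forall fun y => ?_)
  simp only [smul_eq_mul, sub_add_cancel]
  ring

lemma RR_deriv {u : ℝ → ℝ} (hu : PB u) {s : ℝ≥0} (hs : s ≠ 0) (t : ℝ) :
    HasDerivAt (RR s 0 u) ((s : ℝ)⁻¹ * RR s 1 u t) t := by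
  obtain ⟨hm, C, hC, c, h⟩ := hu
  have hs' : (0:ℝ) < s := by positivity
  have e0 : RR s 0 u = fun t => ∫ y, u y * gaussianPDFReal 0 s (y - t) := by
    funext t; rw [RR_zero_vol hs]; simp
  rw [RR_zero_vol hs, e0, ← integral_const_mul]
  set K : ℝ := (Real.sqrt (2 * Real.pi * s))⁻¹ with hK
  have hK0 : 0 ≤ K := by positivity
  have hpdf : ∀ y, gaussianPDFReal 0 s y = K * Real.exp (-y ^ 2 / (2 * s)) := by
    intro y; simp [gaussianPDFReal, hK]
  have hpm : Measurable (gaussianPDFReal 0 s) := measurable_gaussianPDFReal 0 s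
  have hub : ∀ y, |u y| ≤ C * (1 + |t|) ^ c * (1 + |y - t|) ^ c := by
    intro y
    refine (h y).trans ?_
    rw [mul_assoc, ← mul_pow]
    gcongr
    have := one_add_abs_add (y - t) t
    rw [sub_add_cancel] at this
    linarith
  have hexp : ∀ y r, |r - t| ≤ 1 → Real.exp (-(y - r) ^ 2 / (2 * s)) ≤
      Real.exp (1 / (2 * s)) * Real.exp (-(1 / (4 * s)) * (y - t) ^ 2) := by
    intro y r hr
    rw [← Real.exp_add]
    apply Real.exp_le_exp.mpr
    have hr2 : (r - t) ^ 2 ≤ 1 := by rw [← sq_abs]; exact pow_le_one₀ (abs_nonneg _) hr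
    have : 1 / (2 * s) + -(1 / (4 * s)) * (y - t) ^ 2 - (-(y - r) ^ 2 / (2 * s))
      = (1 + (y - r) ^ 2 - (y - t) ^ 2 / 2) / (2 * (s:ℝ)) := by field_simp; ring
    have h3 : 0 ≤ (1 + (y - r) ^ 2 - (y - t) ^ 2 / 2) / (2 * (s:ℝ)) := by
      apply div_nonneg _ (by positivity)
      nlinarith [sq_nonneg ((y - r) - (r - t))]
    linarith
  have hint := integ_vol t (b := 1 / (4 * (s:ℝ))) (by positivity)
  have main := hasDerivAt_integral_of_dominated_loc_of_deriv_le (μ := volume)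
    (F := fun r y => u y * gaussianPDFReal 0 s (y - r))
    (F' := fun r y => (s:ℝ)⁻¹ * ((y - r) ^ 1 * u y * gaussianPDFReal 0 s (y - r)))
    (x₀ := t) (s := Metric.ball t 1)
    (bound := fun y => ((s:ℝ)⁻¹ * (C * (1 + |t|) ^ c) * K * Real.exp (1 / (2 * s))) *
      ((1 + |y - t|) ^ (c + 1) * Real.exp (-(1 / (4 * (s:ℝ))) * (y - t) ^ 2)))
    (Metric.ball_mem_nhds t one_pos)
    (Eventually.of_forall fun r => Measurable.aestronglyMeasurable (by fun_prop)) ?_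
    (Measurable.aestronglyMeasurable (by fun_prop))
    (Eventually.of_forall fun y r hr => ?_) ((hint (c + 1)).const_mul _)
    (Eventually.of_forall fun y r hr => ?_)
  · exact main.2
  · refine Integrable.mono' ((hint c).const_mul ((C * (1 + |t|) ^ c) * K * Real.exp (1 / (2 * s))))
      (Measurable.aestronglyMeasurable (by fun_prop)) (Eventually.of_forall fun y => ?_)
    rw [hpdf, Real.norm_eq_abs, abs_mul, abs_of_nonneg (show 0 ≤ K * _ by positivity)]
    calc _ ≤ (C * (1 + |t|) ^ c * (1 + |y - t|) ^ c) *
          (K * (Real.exp (1 / (2 * s)) * Real.exp (-(1 / (4 * s)) * (y - t) ^ 2))) := by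
          gcongr
          · exact hub y
          · exact hexp y t (by simp)
      _ = _ := by ring
  · have hr : |r - t| ≤ 1 := by
      rw [Metric.mem_ball, Real.dist_eq] at hr; exact hr.le
    have h5 : |y - r| ≤ 1 + |y - t| := by
      have : y - r = (y - t) - (r - t) := by ring
      rw [this]
      have := abs_sub (y - t) (r - t)
      linarith
    rw [hpdf, Real.norm_eq_abs, pow_one, abs_mul, abs_mul, abs_mul,
      abs_of_nonneg (show 0 ≤ K * _ by positivity), abs_of_pos (inv_pos.mpr hs')]
    calc _ ≤ (s:ℝ)⁻¹ * ((1 + |y - t|) * (C * (1 + |t|) ^ c * (1 + |y - t|) ^ c) *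
          (K * (Real.exp (1 / (2 * s)) * Real.exp (-(1 / (4 * s)) * (y - t) ^ 2)))) := by
          gcongr
          · exact hub y
          · exact hexp y r hr
      _ = _ := by ring
  · simp_rw [hpdf]
    have h1 : HasDerivAt (fun r => -(y - r) ^ 2 / (2 * (s:ℝ))) ((y - r) / s) r := by
      have := (((hasDerivAt_id r).const_sub y).pow 2).neg.div_const (2 * (s:ℝ))
      refine this.congr_deriv ?_
      simp
      field_simp
    have := ((h1.exp).const_mul K).const_mul (u y)
    refine this.congr_deriv ?_
    field_simp

/-- bundled -/
abbrev PBF : Type := {u : ℝ → ℝ // PB u}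

def PP (s : ℝ≥0) (u : PBF) : PBF := ⟨RR s 0 u.1, u.2.RR s 0⟩
def QQ (s : ℝ≥0) (u : PBF) : PBF := ⟨RR s 1 u.1, u.2.RR s 1⟩

lemma PQ_comm (s : ℝ≥0) : Function.Commute (PP s) (QQ s) := fun u =>
  Subtype.ext (RR_comm u.2 s s 0 1)

lemma PP_iter (s : ℝ≥0) (n : ℕ) (u : PBF) : ((PP s)^[n] u).1 = RR (n * s) 0 u.1 := by
  induction n with
  | zero =>
    funext t
    simp [RR]
  | succ n ih =>
    rw [Function.iterate_succ_apply']
    change RR s 0 ((PP s)^[n] u).1 = _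
    rw [ih, RR_add u.2]
    congr 1
    push_cast; ring

lemma iter_deriv (s : ℝ≥0) (hs : s ≠ 0) (u : PBF) (k : ℕ) : ∀ b,
    iteratedDeriv k ((PP s)^[k + b] u).1 =
      fun t => (s : ℝ)⁻¹ ^ k * ((QQ s)^[k] ((PP s)^[b] u)).1 t := by
  induction k with
  | zero => intro b; simp
  | succ k ih =>
    intro b
    rw [iteratedDeriv_succ, show k + 1 + b = k + (b + 1) by ring, ih (b + 1)]
    funext t
    have h1 : (QQ s)^[k] ((PP s)^[b+1] u) = PP s ((QQ s)^[k] ((PP s)^[b] u)) := by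
      rw [Function.iterate_succ_apply']
      exact (((PQ_comm s).iterate_right k) _).symm
    rw [h1]
    have h2 := (RR_deriv ((QQ s)^[k] ((PP s)^[b] u)).2 hs t).const_mul ((s:ℝ)⁻¹ ^ k)
    change deriv (fun t => (s:ℝ)⁻¹ ^ k * RR s 0 ((QQ s)^[k] ((PP s)^[b] u)).1 t) t = _
    rw [h2.deriv, Function.iterate_succ_apply', pow_succ, mul_assoc]
    rfl

lemma gsmooth_eq (σ : ℝ → ℝ) : gsmooth σ 1 = RR 1 0 σ := by
  funext t; simp [gsmooth, RR]

lemma RR_sign (s : ℝ≥0) (e : ℕ) (g : ℝ → ℝ) (t ε : ℝ) (hε : ε = 1 ∨ ε = -1) :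
    ∫ y, y ^ e * g (y * ε + t) ∂ gaussianReal 0 s = ε ^ e * RR s e g t := by
  unfold RR
  rcases hε with rfl | rfl
  · simp
  · have h : gaussianReal 0 s = (gaussianReal 0 s).map (fun x => -x) := by
      rw [gaussianReal_map_neg]; simp
    conv_rhs => rw [h]
    change _ = _ * ∫ y, _ ∂Measure.map (MeasurableEquiv.neg ℝ) _
    rw [(MeasurableEquiv.neg ℝ).measurableEmbedding.integral_map, ← integral_const_mul]
    refine integral_congr_ae (Eventually.of_forall fun y => ?_)
    change y ^ e * g (y * -1 + t) = (-1) ^ e * ((-y) ^ e * g (-y + t))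
    rw [← mul_assoc, ← mul_pow, mul_neg_one, neg_one_mul, neg_neg]

lemma one_add_abs_sum {n : ℕ} (w ε : Fin n → ℝ) (hε : ∀ i, ε i = 1 ∨ ε i = -1) (t : ℝ) :
    1 + |∑ i, w i * ε i + t| ≤ (∏ i, (1 + |w i|)) * (1 + |t|) := by
  refine (one_add_abs_add _ _).trans ?_
  gcongr
  have : ∀ S : Finset (Fin n), 1 + |∑ i ∈ S, w i * ε i| ≤ ∏ i ∈ S, (1 + |w i|) := by
    classical
    intro S
    induction S using Finset.induction_on with
    | empty => simp
    | insert i S hi ih =>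
      rw [Finset.sum_insert hi, Finset.prod_insert hi]
      refine (one_add_abs_add _ _).trans ?_
      have : |w i * ε i| = |w i| := by
        rcases hε i with h | h <;> rw [h] <;> simp
      rw [this]
      gcongr
  exact this _

lemma prod_pow_bound {n : ℕ} (w : Fin n → ℝ) (e : Fin n → ℕ) (he : ∀ i, e i = 0 ∨ e i = 1) :
    |∏ i, w i ^ e i| ≤ ∏ i, (1 + |w i|) := by
  rw [Finset.abs_prod]
  refine Finset.prod_le_prod (fun i _ => abs_nonneg _) fun i _ => ?_
  rcases he i with h | h <;> rw [h] <;> simp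

lemma integ_pi (s : ℝ≥0) (n m : ℕ) :
    Integrable (fun w : Fin n → ℝ => (∏ i, (1 + |w i|)) ^ m)
      (Measure.pi fun _ : Fin n => gaussianReal 0 s) := by
  simp_rw [← Finset.prod_pow]
  exact Integrable.fintype_prod (f := fun _ y => (1 + |y|) ^ m) fun i => integ_pow 0 s m

lemma integ_multi (s : ℝ≥0) {n : ℕ} (e : Fin n → ℕ) (he : ∀ i, e i = 0 ∨ e i = 1)
    (ε : Fin n → ℝ) (hε : ∀ i, ε i = 1 ∨ ε i = -1) (u : PBF) (t : ℝ) :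
    Integrable (fun w : Fin n → ℝ => (∏ i, w i ^ e i) * u.1 (∑ i, w i * ε i + t))
      (Measure.pi fun _ : Fin n => gaussianReal 0 s) := by
  obtain ⟨u, hm, C, hC, c, h⟩ := u
  dsimp only
  refine Integrable.mono' ((integ_pi s n (c + 1)).const_mul (C * (1 + |t|) ^ c))
    (Measurable.aestronglyMeasurable (by fun_prop)) (Eventually.of_forall fun w => ?_)
  rw [Real.norm_eq_abs, abs_mul]
  have h0 : 0 ≤ ∏ i, (1 + |w i|) := Finset.prod_nonneg fun i _ => by positivity
  calc _ ≤ (∏ i, (1 + |w i|)) * (C * ((∏ i, (1 + |w i|)) * (1 + |t|)) ^ c) := by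
        refine mul_le_mul (prod_pow_bound w e he) ((h _).trans ?_) (abs_nonneg _) h0
        gcongr
        exact one_add_abs_sum w ε hε t
    _ = _ := by rw [mul_pow]; ring

lemma multi (s : ℝ≥0) (n : ℕ) : ∀ (e : Fin n → ℕ) (he : ∀ i, e i = 0 ∨ e i = 1)
    (ε : Fin n → ℝ) (hε : ∀ i, ε i = 1 ∨ ε i = -1) (u : PBF) (t : ℝ) (a b : ℕ)
    (ha : ∑ i, e i = a) (hab : a + b = n),
    ∫ w : Fin n → ℝ, (∏ i, w i ^ e i) * u.1 (∑ i, w i * ε i + t)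
      ∂(Measure.pi fun _ : Fin n => gaussianReal 0 s) =
    (∏ i, ε i ^ e i) * ((QQ s)^[a] ((PP s)^[b] u)).1 t := by
  induction n with
  | zero =>
    intro e he ε hε u t a b ha hab
    obtain ⟨rfl, rfl⟩ : a = 0 ∧ b = 0 := by omega
    simp [measureReal_def]
  | succ n ih =>
    intro e he ε hε u t a b ha hab
    have mp := (measurePreserving_piFinSuccAbove (fun _ : Fin (n+1) => gaussianReal 0 s) 0).symm
    have hi := integ_multi s e he ε hε u t
    rw [← mp.integrable_comp_emb (MeasurableEquiv.measurableEmbedding _)] at hi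
    rw [← mp.integral_comp']
    have hF : ∀ p : ℝ × (Fin n → ℝ),
      (fun w : Fin (n+1) → ℝ => (∏ i, w i ^ e i) * u.1 (∑ i, w i * ε i + t))
        ((MeasurableEquiv.piFinSuccAbove (fun _ => ℝ) 0).symm p)
      = p.1 ^ e 0 * ((∏ i : Fin n, p.2 i ^ e i.succ) *
          u.1 (∑ i : Fin n, p.2 i * ε i.succ + (p.1 * ε 0 + t))) := by
      rintro ⟨x, w⟩
      simp [MeasurableEquiv.piFinSuccAbove_symm_apply, Fin.insertNthEquiv, Fin.prod_univ_succ,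
        Fin.sum_univ_succ]
      rw [mul_assoc, show x * ε 0 + ∑ i : Fin n, w i * ε i.succ + t
        = ∑ i : Fin n, w i * ε i.succ + (x * ε 0 + t) by ring]
    have hi2 : Integrable (fun p : ℝ × (Fin n → ℝ) => p.1 ^ e 0 * ((∏ i : Fin n, p.2 i ^ e i.succ) *
          u.1 (∑ i : Fin n, p.2 i * ε i.succ + (p.1 * ε 0 + t))))
        ((gaussianReal 0 s).prod (Measure.pi fun _ : Fin n => gaussianReal 0 s)) := by
      refine hi.congr (Eventually.of_forall fun p => hF p)
    have e1 : ∫ p, (fun w : Fin (n+1) → ℝ => (∏ i, w i ^ e i) * u.1 (∑ i, w i * ε i + t))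
        ((MeasurableEquiv.piFinSuccAbove (fun _ => ℝ) 0).symm p)
        ∂((gaussianReal 0 s).prod (Measure.pi fun _ : Fin n => gaussianReal 0 s))
        = ∫ p : ℝ × (Fin n → ℝ), p.1 ^ e 0 * ((∏ i : Fin n, p.2 i ^ e i.succ) *
          u.1 (∑ i : Fin n, p.2 i * ε i.succ + (p.1 * ε 0 + t)))
        ∂((gaussianReal 0 s).prod (Measure.pi fun _ : Fin n => gaussianReal 0 s)) :=
      integral_congr_ae (Eventually.of_forall fun p => hF p)
    refine e1.trans ?_
    rw [integral_prod _ hi2]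
    simp only [integral_const_mul]
    rw [Fin.sum_univ_succ] at ha
    rw [Fin.prod_univ_succ]
    rcases he 0 with h0 | h0
    · obtain ⟨b, rfl⟩ : ∃ b', b = b' + 1 := by
        refine ⟨b - 1, ?_⟩
        have : ∑ i : Fin n, e i.succ ≤ ∑ i : Fin n, 1 :=
          Finset.sum_le_sum fun i _ => by rcases he i.succ with h | h <;> omega
        simp at this
        omega
      have := fun r => ih (fun i => e i.succ) (fun i => he _) (fun i => ε i.succ) (fun i => hε _)
        u r a b (by omega) (by omega)
      simp only [this]
      rw [show (QQ s)^[a] ((PP s)^[b+1] u) = PP s ((QQ s)^[a] ((PP s)^[b] u)) by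
        rw [Function.iterate_succ_apply']
        exact (((PQ_comm s).iterate_right a) _).symm]
      have h2 := RR_sign s 0 ((QQ s)^[a] ((PP s)^[b] u)).1 t (ε 0) (hε 0)
      simp only [h0, pow_zero, one_mul] at h2 ⊢
      rw [integral_const_mul, h2]
      rfl
    · obtain ⟨a, rfl⟩ : ∃ a', a = a' + 1 := ⟨a - 1, by omega⟩
      have := fun r => ih (fun i => e i.succ) (fun i => he _) (fun i => ε i.succ) (fun i => hε _)
        u r a b (by omega) (by omega)
      simp only [this]
      rw [Function.iterate_succ_apply']
      have h2 := RR_sign s 1 ((QQ s)^[a] ((PP s)^[b] u)).1 t (ε 0) (hε 0)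
      simp only [h0]
      simp_rw [mul_left_comm _ (∏ i : Fin n, ε i.succ ^ e i.succ)]
      rw [integral_const_mul, h2]
      change _ = _ * RR s 1 _ t
      ring

/-- envelope -/
def env {n : ℕ} (θ : (Fin n → ℝ) × ℝ) : ℝ := (∏ i, (1 + |θ.1 i|)) * (1 + |θ.2|)

lemma env_one {n : ℕ} (θ : (Fin n → ℝ) × ℝ) : 1 ≤ env θ := by
  unfold env
  have h : 1 ≤ ∏ i, (1 + |θ.1 i|) := by
    have := one_add_abs_sum θ.1 (fun _ => 1) (fun _ => Or.inl rfl) 0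
    simp only [abs_zero, add_zero, mul_one] at this
    exact le_trans (by linarith [abs_nonneg (∑ i, θ.1 i)]) this
  have := abs_nonneg θ.2
  nlinarith

lemma env_integrable (n m : ℕ) : Integrable (fun θ => env θ ^ m) (initMeasure n) := by
  unfold env initMeasure
  simp_rw [mul_pow]
  exact (integ_pi _ n m).mul_prod (integ_pow 0 _ m)

lemma integ_of_env {n : ℕ} {F : (Fin n → ℝ) × ℝ → ℝ} (hF : Measurable F) (C : ℝ) (m : ℕ)
    (h : ∀ θ, |F θ| ≤ C * env θ ^ m) : Integrable F (initMeasure n) :=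
  Integrable.mono' ((env_integrable n m).const_mul C) hF.aestronglyMeasurable
    (Eventually.of_forall h)

lemma sq_moment (s : ℝ≥0) (hs : s ≤ 1) (e : ℕ) (he : e = 0 ∨ e = 1) :
    ∫ y : ℝ, (y ^ e) ^ 2 ∂ gaussianReal 0 s ≤ 1 := by
  rcases he with rfl | rfl
  · simp
  · have h := variance_fun_id_gaussianReal (μ := 0) (v := s)
    rw [variance_of_integral_eq_zero (by fun_prop) (by simp)] at h
    simp only [pow_one]
    rw [h]; exact_mod_cast hs

lemma h_bound {n : ℕ} (e : Fin n → ℕ) (he : ∀ i, e i = 0 ∨ e i = 1) (d : ℕ) (hd : d = 0 ∨ d = 1)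
    (θ : (Fin n → ℝ) × ℝ) : |(∏ i, θ.1 i ^ e i) * θ.2 ^ d| ≤ env θ := by
  rw [abs_mul]
  unfold env
  refine mul_le_mul (prod_pow_bound _ e he) ?_ (abs_nonneg _)
    (Finset.prod_nonneg fun i _ => by positivity)
  rcases hd with rfl | rfl <;> simp

lemma single_int {n : ℕ} (u : PBF) (e : Fin n → ℕ) (he : ∀ i, e i = 0 ∨ e i = 1)
    (ε : Fin n → ℝ) (hε : ∀ i, ε i = 1 ∨ ε i = -1) (d : ℕ) (hd : d = 0 ∨ d = 1)
    (a b : ℕ) (ha : ∑ i, e i = a) (hab : a + d + b = n) :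
    Integrable (fun θ : (Fin n → ℝ) × ℝ =>
      ((∏ i, θ.1 i ^ e i) * θ.2 ^ d) * u.1 (∑ i, θ.1 i * ε i + θ.2)) (initMeasure n) ∧
    ∫ θ : (Fin n → ℝ) × ℝ, ((∏ i, θ.1 i ^ e i) * θ.2 ^ d) * u.1 (∑ i, θ.1 i * ε i + θ.2)
      ∂ initMeasure n = (∏ i, ε i ^ e i) *
        (PP (n : ℝ≥0)⁻¹ ((QQ (n : ℝ≥0)⁻¹)^[a + d] ((PP (n : ℝ≥0)⁻¹)^[b] u))).1 0 := by
  have hint : Integrable (fun θ : (Fin n → ℝ) × ℝ =>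
      ((∏ i, θ.1 i ^ e i) * θ.2 ^ d) * u.1 (∑ i, θ.1 i * ε i + θ.2)) (initMeasure n) := by
    obtain ⟨u, hm, C, hC, c, h⟩ := u
    dsimp only
    refine integ_of_env (by fun_prop) C (c + 1) fun θ => ?_
    rw [abs_mul]
    have h0 : 0 ≤ env θ := zero_le_one.trans (env_one θ)
    calc _ ≤ env θ * (C * env θ ^ c) := by
          refine mul_le_mul (h_bound e he d hd θ) ((h _).trans ?_) (abs_nonneg _) h0
          gcongr
          exact one_add_abs_sum _ ε hε _
      _ = _ := by ring
  refine ⟨hint, ?_⟩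
  set s : ℝ≥0 := (n : ℝ≥0)⁻¹ with hs
  have hint' := hint
  unfold initMeasure at hint' ⊢
  rw [integral_prod _ hint']
  rw [← hs]
  have h1 : ∀ w : Fin n → ℝ, ∫ y, ((∏ i, w i ^ e i) * y ^ d) * u.1 (∑ i, w i * ε i + y)
      ∂ gaussianReal 0 s = (∏ i, w i ^ e i) * RR s d u.1 (∑ i, w i * ε i + 0) := by
    intro w
    unfold RR
    rw [← integral_const_mul]
    refine integral_congr_ae (Eventually.of_forall fun y => ?_)
    simp only [add_zero]
    rw [add_comm y, mul_assoc]
  simp only [h1]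
  rcases hd with rfl | rfl
  · refine (multi s n e he ε hε (PP s u) 0 a b ha (by omega)).trans ?_
    congr 2
    rw [← Function.iterate_succ_apply, Function.iterate_succ_apply']
    exact congrArg (fun v : PBF => v.1 0) (((PQ_comm s).iterate_right a) ((PP s)^[b] u)).symm
  · refine (multi s n e he ε hε (QQ s u) 0 a (b + 1) ha (by omega)).trans ?_
    congr 2
    rw [Function.iterate_succ_apply', ((PQ_comm s).iterate_left b) u,
      ((PQ_comm s).iterate_right (a + 1)) _, Function.iterate_succ_apply,
      (PQ_comm s) _]

lemma key_bound {n : ℕ} (hn : 0 < n) (u : PBF) (f : (Fin n → Bool) → ℝ) (hf : IsBooleanFn f)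
    (T : Finset (Fin n)) (d : ℕ) (hd : d = 0 ∨ d = 1) (hT : T.card + d ≤ n) :
    (fourierCoef n f T * (((n : ℝ)⁻¹) ^ (T.card + d) *
      RR (n : ℝ≥0)⁻¹ 0 (iteratedDeriv (T.card + d) (gsmooth u.1 1)) 0)) ^ 2 ≤ INAL n f u.1 := by
  classical
  obtain ⟨b, hb⟩ := Nat.exists_eq_add_of_le hT
  set e : Fin n → ℕ := fun i => if i ∈ T then 1 else 0 with he
  have he' : ∀ i, e i = 0 ∨ e i = 1 := fun i => by simp only [he]; split_ifs <;> simp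
  have hsum : ∑ i, e i = T.card := by simp [he]
  set s : ℝ≥0 := (n : ℝ≥0)⁻¹ with hs
  have hs0 : s ≠ 0 := by rw [hs]; positivity
  have hsR : (s : ℝ) = (n : ℝ)⁻¹ := by simp [hs]
  set A : ℝ := (PP s ((QQ s)^[T.card + d] ((PP s)^[b] u))).1 0 with hA
  have hAeq : (n : ℝ)⁻¹ ^ (T.card + d) *
      RR s 0 (iteratedDeriv (T.card + d) (gsmooth u.1 1)) 0 = A := by
    have h1 : gsmooth u.1 1 = ((PP s)^[T.card + d + b] u).1 := by
      rw [gsmooth_eq, PP_iter, ← hb, hs, mul_inv_cancel₀]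
      positivity
    rw [h1, iter_deriv s hs0]
    have : RR s 0 (fun t => (s:ℝ)⁻¹ ^ (T.card + d) * ((QQ s)^[T.card + d] ((PP s)^[b] u)).1 t) 0
        = (s:ℝ)⁻¹ ^ (T.card + d) * A := by
      rw [hA]
      change _ = _ * RR s 0 _ 0
      unfold RR
      rw [← integral_const_mul]
      refine integral_congr_ae (Eventually.of_forall fun y => ?_)
      simp only
      ring
    rw [this, hsR, ← mul_assoc, ← mul_pow, inv_inv, inv_mul_cancel₀ (by positivity), one_pow, one_mul]
  rw [hAeq]
  have hε : ∀ (x : Fin n → Bool) i, bsign (x i) = 1 ∨ bsign (x i) = -1 := fun x i => by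
    cases x i <;> simp [bsign]
  have hchi : ∀ x : Fin n → Bool, ∏ i, bsign (x i) ^ e i = chi T x := by
    intro x
    simp only [he, chi, pow_ite, pow_one, pow_zero]
    rw [Finset.prod_ite_mem]; simp
  have hsingle := fun x : Fin n → Bool => single_int u e he' (fun i => bsign (x i)) (hε x) d hd
    T.card b hsum hb.symm
  let h : (Fin n → ℝ) × ℝ → ℝ := fun θ => (∏ i, θ.1 i ^ e i) * θ.2 ^ d
  let G : (Fin n → ℝ) × ℝ → ℝ := fun θ =>
    bExp n fun x => f x * u.1 (∑ i, θ.1 i * bsign (x i) + θ.2)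
  have hhm : Measurable h := by fun_prop
  have hum : Measurable u.1 := u.2.1
  have hGm : Measurable G := by
    unfold G bExp
    fun_prop
  have hGh : ∀ θ, h θ * G θ = ∑ x : Fin n → Bool, (f x / 2 ^ n) *
      (((∏ i, θ.1 i ^ e i) * θ.2 ^ d) * u.1 (∑ i, θ.1 i * bsign (x i) + θ.2)) := by
    intro θ
    simp only [h, G, bExp]
    rw [Finset.sum_div, Finset.mul_sum]
    refine Finset.sum_congr rfl fun x _ => by ring
  have hGhi : Integrable (fun θ => h θ * G θ) (initMeasure n) := by
    simp_rw [hGh]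
    exact integrable_finset_sum _ fun x _ => (hsingle x).1.const_mul _
  have hval : ∫ θ, h θ * G θ ∂ initMeasure n = fourierCoef n f T * A := by
    simp_rw [hGh]
    rw [integral_finset_sum _ fun x _ => (hsingle x).1.const_mul _]
    simp_rw [integral_const_mul, (hsingle _).2, hchi]
    unfold fourierCoef bExp
    rw [Finset.sum_div, Finset.sum_mul]
    refine Finset.sum_congr rfl fun x _ => by ring
  have hh2i : Integrable (fun θ => h θ ^ 2) (initMeasure n) := by
    refine integ_of_env (by fun_prop) 1 2 fun θ => ?_
    rw [abs_pow, one_mul]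
    have := h_bound e he' d hd θ
    gcongr
  have hh2 : ∫ θ, h θ ^ 2 ∂ initMeasure n ≤ 1 := by
    simp only [h, mul_pow, ← Finset.prod_pow]
    unfold initMeasure
    rw [integral_prod_mul (fun w : Fin n → ℝ => ∏ i, (w i ^ e i) ^ 2) (fun y : ℝ => (y ^ d) ^ 2),
      integral_fintype_prod_eq_prod (fun i (y : ℝ) => (y ^ e i) ^ 2)]
    have hs1 : s ≤ 1 := by
      rw [hs]; apply inv_le_one_of_one_le₀; exact_mod_cast hn
    refine mul_le_one₀ ?_ (integral_nonneg fun y => by positivity) (sq_moment s hs1 d hd)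
    exact Finset.prod_le_one (fun i _ => integral_nonneg fun y => by positivity)
      fun i _ => sq_moment s hs1 (e i) (he' i)
  have hG2i : Integrable (fun θ => G θ ^ 2) (initMeasure n) := by
    obtain ⟨C, hC, c, hb⟩ := u.2.2
    refine integ_of_env (by fun_prop) (C ^ 2) (c * 2) fun θ => ?_
    rw [abs_pow, pow_mul, ← mul_pow]
    have h0 : 0 ≤ env θ := zero_le_one.trans (env_one θ)
    refine pow_le_pow_left₀ (abs_nonneg _) ?_ 2
    simp only [G, bExp]
    rw [abs_div, abs_of_pos (show (0:ℝ) < 2 ^ n by positivity), div_le_iff₀ (by positivity)]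
    refine (Finset.abs_sum_le_sum_abs _ _).trans ?_
    have : ∀ x ∈ (Finset.univ : Finset (Fin n → Bool)),
        |f x * u.1 (∑ i, θ.1 i * bsign (x i) + θ.2)| ≤ C * env θ ^ c := by
      intro x _
      have hfx : |f x| = 1 := by rcases hf x with h | h <;> rw [h] <;> simp
      rw [abs_mul, hfx, one_mul]
      refine (hb _).trans ?_
      gcongr
      exact one_add_abs_sum _ _ (hε x) _
    refine (Finset.sum_le_card_nsmul _ _ _ this).trans (le_of_eq ?_)
    simp
    ring
  have hfin : 0 ≤ ∫ θ, (G θ - (fourierCoef n f T * A) * h θ) ^ 2 ∂ initMeasure n :=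
    integral_nonneg fun θ => sq_nonneg _
  set l := fourierCoef n f T * A with hl
  have hexp : ∫ θ, (G θ - l * h θ) ^ 2 ∂ initMeasure n
      = INAL n f u.1 - 2 * l * l + l ^ 2 * ∫ θ, h θ ^ 2 ∂ initMeasure n := by
    have : ∀ θ, (G θ - l * h θ) ^ 2 = (G θ ^ 2 - 2 * l * (h θ * G θ)) + l ^ 2 * h θ ^ 2 :=
      fun θ => by ring
    simp_rw [this]
    have hsub : Integrable (fun θ => G θ ^ 2 - 2 * l * (h θ * G θ)) (initMeasure n) :=
      hG2i.sub (hGhi.const_mul _)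
    rw [integral_add hsub (hh2i.const_mul _),
      integral_sub hG2i (hGhi.const_mul _), integral_const_mul, integral_const_mul, hval]
    rfl
  rw [hexp] at hfin
  nlinarith [sq_nonneg l]

lemma RR_tendsto {g : ℝ → ℝ} (hg : PB g) (hc : Continuous g) :
    Tendsto (fun n : ℕ => RR (n : ℝ≥0)⁻¹ 0 g 0) atTop (nhds (g 0)) := by
  obtain ⟨hm, C, hC, c, h⟩ := hg
  have h1 : ∀ n : ℕ, RR (n : ℝ≥0)⁻¹ 0 g 0 = ∫ y, g (Real.sqrt ((n:ℝ)⁻¹) * y) ∂ gaussianReal 0 1 := by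
    intro n
    have : gaussianReal 0 (n : ℝ≥0)⁻¹ = (gaussianReal 0 1).map (fun y => Real.sqrt ((n:ℝ)⁻¹) * y) := by
      rw [gaussianReal_map_const_mul]
      congr 1
      · simp
      · apply NNReal.eq
        simp
    unfold RR
    rw [this, integral_map (by fun_prop) (by
      exact Measurable.aestronglyMeasurable (by fun_prop))]
    simp
  simp_rw [h1]
  have h2 : g 0 = ∫ y : ℝ, g 0 ∂ gaussianReal 0 1 := by simp
  rw [h2]
  refine tendsto_integral_filter_of_dominated_convergence (fun y => C * (1 + |y|) ^ c)
    (Eventually.of_forall fun n => Measurable.aestronglyMeasurable (by fun_prop)) ?_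
    ((integ_pow 0 1 c).const_mul C) (Eventually.of_forall fun y => ?_)
  · filter_upwards [eventually_ge_atTop 1] with n hn
    refine Eventually.of_forall fun y => (h _).trans ?_
    have : Real.sqrt ((n:ℝ)⁻¹) ≤ 1 := by
      rw [Real.sqrt_le_one]
      apply inv_le_one_of_one_le₀; exact_mod_cast hn
    have h3 : |Real.sqrt ((n:ℝ)⁻¹) * y| ≤ |y| := by
      rw [abs_mul, abs_of_nonneg (Real.sqrt_nonneg _)]
      exact mul_le_of_le_one_left (abs_nonneg _) this
    gcongr
  · have : Tendsto (fun n : ℕ => Real.sqrt ((n:ℝ)⁻¹) * y) atTop (nhds (Real.sqrt 0 * y)) :=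
      ((Real.continuous_sqrt.tendsto 0).comp tendsto_inv_atTop_nhds_zero_nat).mul_const y
    rw [Real.sqrt_zero, zero_mul] at this
    exact (hc.tendsto 0).comp this

lemma smooth_PB (u : PBF) (j : ℕ) : PB (iteratedDeriv j (gsmooth u.1 1)) ∧
    Continuous (iteratedDeriv j (gsmooth u.1 1)) := by
  set s : ℝ≥0 := ((j + 1 : ℕ) : ℝ≥0)⁻¹ with hs
  have hs0 : s ≠ 0 := by rw [hs]; positivity
  have h1 : gsmooth u.1 1 = ((PP s)^[j + 1] u).1 := by
    rw [gsmooth_eq, PP_iter, hs, mul_inv_cancel₀]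
    positivity
  rw [h1, iter_deriv s hs0 u j 1]
  have h2 : (QQ s)^[j] ((PP s)^[1] u) = PP s ((QQ s)^[j] u) :=
    (((PQ_comm s).iterate_right j) _).symm
  rw [h2]
  constructor
  · obtain ⟨hm, C, hC, c, h⟩ := (PP s ((QQ s)^[j] u)).2
    refine ⟨hm.const_mul _, |(s:ℝ)⁻¹ ^ j| * C, by positivity, c, fun x => ?_⟩
    rw [abs_mul, mul_assoc]
    gcongr
    exact h x
  · refine continuous_const.mul ?_
    exact continuous_iff_continuousAt.mpr fun t =>
      (RR_deriv ((QQ s)^[j] u).2 hs0 t).continuousAt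

lemma INAL_nonneg (n : ℕ) (f : (Fin n → Bool) → ℝ) (σ : ℝ → ℝ) : 0 ≤ INAL n f σ :=
  integral_nonneg fun θ => sq_nonneg _

lemma level_aux (u : PBF) (f : ∀ n : ℕ, (Fin n → Bool) → ℝ) (hf : ∀ n, IsBooleanFn (f n))
    (k d : ℕ) (hd : d = 0 ∨ d = 1) (hne : iteratedDeriv (k + d) (gsmooth u.1 1) 0 ≠ 0) :
    ∃ C : ℝ, 0 ≤ C ∧ ∃ a : ℕ, ∀ᶠ n : ℕ in atTop, ∀ T : Finset (Fin n), T.card = k →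
      fourierCoef n (f n) T ^ 2 ≤ C * (n : ℝ) ^ a * INAL n (f n) u.1 := by
  set g := iteratedDeriv (k + d) (gsmooth u.1 1) with hg
  obtain ⟨hPB, hc⟩ := smooth_PB u (k + d)
  have ht := (RR_tendsto hPB hc).pow 2
  have hpos : 0 < g 0 ^ 2 := by positivity
  have hev := ht.eventually (lt_mem_nhds (show g 0 ^ 2 / 2 < g 0 ^ 2 by linarith))
  refine ⟨2 / g 0 ^ 2, by positivity, 2 * (k + d), ?_⟩
  filter_upwards [hev, eventually_ge_atTop (k + d + 1)] with n hn hnk T hT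
  have hn0 : 0 < n := by omega
  have := key_bound hn0 u (f n) (hf n) T d hd (by omega)
  rw [hT] at this
  have hnR : (0:ℝ) < n := by exact_mod_cast hn0
  set I := INAL n (f n) u.1
  set F := fourierCoef n (f n) T
  rw [← hg] at this
  change g 0 ^ 2 / 2 < (RR (n : ℝ≥0)⁻¹ 0 g 0) ^ 2 at hn
  have h1 : F ^ 2 * (g 0 ^ 2 / 2) * ((n:ℝ)⁻¹ ^ (k + d)) ^ 2 ≤ I := by
    refine le_trans ?_ this
    rw [mul_pow, mul_pow]
    have : F ^ 2 * ((n:ℝ)⁻¹ ^ (k + d)) ^ 2 * (g 0 ^ 2 / 2)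
        ≤ F ^ 2 * ((n:ℝ)⁻¹ ^ (k + d)) ^ 2 * RR (n : ℝ≥0)⁻¹ 0 g 0 ^ 2 := by gcongr
    linarith
  have h2 : F ^ 2 = (2 / g 0 ^ 2) * (n:ℝ) ^ (2 * (k + d)) *
      (F ^ 2 * (g 0 ^ 2 / 2) * ((n:ℝ)⁻¹ ^ (k + d)) ^ 2) := by
    have : (n:ℝ) ^ (2 * (k + d)) * ((n:ℝ)⁻¹ ^ (k + d)) ^ 2 = 1 := by
      rw [← pow_mul, mul_comm (k + d) 2, ← mul_pow, mul_inv_cancel₀ hnR.ne', one_pow]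
    calc F ^ 2 = F ^ 2 * ((2 / g 0 ^ 2) * (g 0 ^ 2 / 2)) *
          ((n:ℝ) ^ (2 * (k + d)) * ((n:ℝ)⁻¹ ^ (k + d)) ^ 2) := by
            rw [this]; field_simp
      _ = _ := by ring
  rw [h2]
  gcongr

lemma level_all (u : PBF) (hu : ∀ m : ℕ, iteratedDeriv m (gsmooth u.1 1) 0 ≠ 0 ∨
      iteratedDeriv (m + 1) (gsmooth u.1 1) 0 ≠ 0)
    (f : ∀ n : ℕ, (Fin n → Bool) → ℝ) (hf : ∀ n, IsBooleanFn (f n)) (k : ℕ) :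
    ∃ C : ℝ, 0 ≤ C ∧ ∃ a : ℕ, ∀ᶠ n : ℕ in atTop, ∀ T : Finset (Fin n), T.card < k →
      fourierCoef n (f n) T ^ 2 ≤ C * (n : ℝ) ^ a * INAL n (f n) u.1 := by
  induction k with
  | zero => exact ⟨0, le_rfl, 0, by simp⟩
  | succ k ih =>
    obtain ⟨C, hC, a, h⟩ := ih
    obtain ⟨C', hC', a', h'⟩ : ∃ C : ℝ, 0 ≤ C ∧ ∃ a : ℕ, ∀ᶠ n : ℕ in atTop,
        ∀ T : Finset (Fin n), T.card = k →
        fourierCoef n (f n) T ^ 2 ≤ C * (n : ℝ) ^ a * INAL n (f n) u.1 := by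
      rcases hu k with h0 | h0
      · exact level_aux u f hf k 0 (Or.inl rfl) h0
      · exact level_aux u f hf k 1 (Or.inr rfl) h0
    refine ⟨C + C', by positivity, a + a', ?_⟩
    filter_upwards [h, h', eventually_ge_atTop 1] with n h1 h2 hn T hT
    have hn1 : (1:ℝ) ≤ n := by exact_mod_cast hn
    have hI := INAL_nonneg n (f n) u.1
    rcases Nat.lt_succ_iff_lt_or_eq.mp hT with hlt | heq
    · refine (h1 T hlt).trans ?_
      gcongr
      · linarith
      · omega
    · refine (h2 T heq).trans ?_
      gcongr
      · linarith
      · omega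

lemma expressive_PB {σ : ℝ → ℝ} (hσ : Expressive σ) : PB σ := by
  obtain ⟨hm, ⟨C, hC, c, hc, h⟩, -⟩ := hσ
  refine ⟨hm, 2 * C, by positivity, c, fun x => (h x).trans ?_⟩
  have h1 : |x| ^ c ≤ (1 + |x|) ^ c := by gcongr; linarith
  have h2 : 1 ≤ (1 + |x|) ^ c := one_le_pow₀ (by linarith [abs_nonneg x])
  nlinarith

lemma orbitCP_nonneg (N : ℕ) (f : (Fin N → Bool) → ℝ) : 0 ≤ orbitCP N f := by
  unfold orbitCP
  positivity

/-- If `σ` is expressive and the Boolean sequence `(f_n)` has negligible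
`INAL(f_n, σ)`, then for every `ε > 0` the cross-predictability of the orbit of the
`n^{1+ε}`-extension of `f_n` is negligible. -/
theorem inal_negligible_implies_orbitCP_negligible
    (σ : ℝ → ℝ) (hσ : Expressive σ)
    (f : ∀ n : ℕ, (Fin n → Bool) → ℝ) (hf : ∀ n, IsBooleanFn (f n))
    (hINAL : Negligible fun n => INAL n (f n) σ) :
    ∀ ε : ℝ, 0 < ε →
      Negligible fun n => orbitCP (Ndim ε n) (extendFn n (Ndim ε n) (f n)) := by
  intro ε hε c
  set u : PBF := ⟨σ, expressive_PB hσ⟩ with hu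
  obtain ⟨k, hk⟩ := exists_nat_ge (((c : ℝ) + 1) / ε)
  rw [div_le_iff₀ hε] at hk
  obtain ⟨M, hM⟩ := exists_nat_ge (1 + ε)
  obtain ⟨C, hC, a, hev⟩ := level_all u hσ.2.2 f hf k
  have hlim : Tendsto (fun n : ℕ => 3 ^ k * C * ((n:ℝ) ^ (c + M * k + a) * INAL n (f n) σ) + (n:ℝ)⁻¹)
      atTop (nhds 0) := by
    have := ((hINAL (c + M * k + a)).const_mul (3 ^ k * C)).add
      (tendsto_inv_atTop_nhds_zero_nat (𝕜 := ℝ))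
    simpa using this
  refine squeeze_zero' (Eventually.of_forall fun n => mul_nonneg (by positivity)
    (orbitCP_nonneg _ _)) ?_ hlim
  filter_upwards [hev, eventually_ge_atTop 1] with n hn hn1
  have hn1R : (1:ℝ) ≤ n := by exact_mod_cast hn1
  have hn0R : (0:ℝ) < n := by linarith
  have hI := INAL_nonneg n (f n) σ
  have hpow_le : (n:ℝ) ^ (1 + ε) ≤ Ndim ε n := Nat.le_ceil _
  have hsplit : (n:ℝ) ^ (1 + ε) = n * (n:ℝ) ^ ε := by
    rw [Real.rpow_add hn0R, Real.rpow_one]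
  have hε1 : 1 ≤ (n:ℝ) ^ ε := Real.one_le_rpow hn1R hε.le
  have hnNR : (n:ℝ) ≤ Ndim ε n := by
    refine le_trans ?_ hpow_le
    rw [hsplit]
    nlinarith
  have hnN : n ≤ Ndim ε n := by exact_mod_cast hnNR
  have hNpos : 0 < Ndim ε n := by omega
  have hNup : (Ndim ε n : ℝ) + 1 ≤ 3 * (n:ℝ) ^ M := by
    have h1 : (Ndim ε n : ℝ) < (n:ℝ) ^ (1 + ε) + 1 := Nat.ceil_lt_add_one (by positivity)
    have h2 : (n:ℝ) ^ (1 + ε) ≤ (n:ℝ) ^ M := by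
      rw [← Real.rpow_natCast]
      exact Real.rpow_le_rpow_of_exponent_le hn1R hM
    have h3 : 1 ≤ (n:ℝ) ^ M := one_le_pow₀ hn1R
    linarith
  have hb := orbitCP_bound hnN hNpos (f n) (hf n) k (C * (n:ℝ) ^ a * INAL n (f n) σ)
    (by positivity) hn
  have hratio : (n:ℝ) ^ c * ((n:ℝ) / Ndim ε n) ^ k ≤ (n:ℝ)⁻¹ := by
    have h1 : (n:ℝ) / Ndim ε n ≤ (n:ℝ) ^ (-ε) := by
      rw [div_le_iff₀ (by exact_mod_cast hNpos), Real.rpow_neg hn0R.le]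
      rw [hsplit] at hpow_le
      calc (n:ℝ) = ((n:ℝ) ^ ε)⁻¹ * (n * (n:ℝ) ^ ε) := by field_simp
        _ ≤ _ := by gcongr
    calc (n:ℝ) ^ c * ((n:ℝ) / Ndim ε n) ^ k ≤ (n:ℝ) ^ c * ((n:ℝ) ^ (-ε)) ^ k := by gcongr
      _ = (n:ℝ) ^ ((c:ℝ) + -ε * k) := by
        rw [← Real.rpow_natCast, ← Real.rpow_natCast, ← Real.rpow_mul hn0R.le,
          ← Real.rpow_add hn0R]
      _ ≤ (n:ℝ) ^ (-1 : ℝ) := Real.rpow_le_rpow_of_exponent_le hn1R (by linarith)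
      _ = _ := Real.rpow_neg_one _
  calc (n:ℝ) ^ c * orbitCP (Ndim ε n) (extendFn n (Ndim ε n) (f n))
      ≤ (n:ℝ) ^ c * (((Ndim ε n : ℝ) + 1) ^ k * (C * (n:ℝ) ^ a * INAL n (f n) σ)
        + ((n:ℝ) / Ndim ε n) ^ k) := by gcongr
    _ = (n:ℝ) ^ c * (((Ndim ε n : ℝ) + 1) ^ k * (C * (n:ℝ) ^ a * INAL n (f n) σ))
        + (n:ℝ) ^ c * ((n:ℝ) / Ndim ε n) ^ k := by ring
    _ ≤ (n:ℝ) ^ c * ((3 * (n:ℝ) ^ M) ^ k * (C * (n:ℝ) ^ a * INAL n (f n) σ)) + (n:ℝ)⁻¹ := by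
        gcongr
    _ = _ := by rw [mul_pow, ← pow_mul, pow_add, pow_add]; ring
end
end

section
/- If σ : ℝ → ℝ is expressive, then σ is 1-strongly correlating: for every fixed k ∈ ℕ, INAL(M_k, σ) = Ω(n^{-(k+1)}) as n → ∞, where M_k(x) = ∏_{i=1}^k x_i is viewed as a Boolean function on {±1}^n for every n ≥ k. -/
open MeasureTheory ProbabilityTheory Filter Finset Asymptotics
open scoped NNReal ENNReal

noncomputable section

/-! Polynomial growth class -/

def PBd (f : ℝ → ℝ) : Prop := ∃ C : ℝ, 0 ≤ C ∧ ∃ c : ℕ, ∀ x : ℝ, |f x| ≤ C * (1 + |x|) ^ c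

lemma PBd.add {f g : ℝ → ℝ} (hf : PBd f) (hg : PBd g) : PBd (fun x => f x + g x) := by
  obtain ⟨C, hC, c, hf⟩ := hf
  obtain ⟨D, hD, d, hg⟩ := hg
  refine ⟨C + D, by positivity, c + d, fun x => ?_⟩
  have h1 : (1:ℝ) ≤ 1 + |x| := by linarith [abs_nonneg x]
  have h2 : (1 + |x|) ^ c ≤ (1 + |x|) ^ (c + d) := pow_le_pow_right₀ h1 (by omega)
  have h3 : (1 + |x|) ^ d ≤ (1 + |x|) ^ (c + d) := pow_le_pow_right₀ h1 (by omega)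
  calc |f x + g x| ≤ |f x| + |g x| := abs_add_le _ _
    _ ≤ C * (1 + |x|) ^ c + D * (1 + |x|) ^ d := add_le_add (hf x) (hg x)
    _ ≤ C * (1 + |x|) ^ (c + d) + D * (1 + |x|) ^ (c + d) := by gcongr
    _ = _ := by ring

lemma PBd.mul {f g : ℝ → ℝ} (hf : PBd f) (hg : PBd g) : PBd (fun x => f x * g x) := by
  obtain ⟨C, hC, c, hf⟩ := hf
  obtain ⟨D, hD, d, hg⟩ := hg
  refine ⟨C * D, by positivity, c + d, fun x => ?_⟩
  calc |f x * g x| = |f x| * |g x| := abs_mul _ _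
    _ ≤ (C * (1 + |x|) ^ c) * (D * (1 + |x|) ^ d) := by
        gcongr
        · exact hf x
        · exact hg x
    _ = _ := by ring

lemma PBd.const (a : ℝ) : PBd (fun _ => a) := ⟨|a|, abs_nonneg _, 0, fun x => by simp⟩

lemma PBd.idd : PBd (fun x => x) := ⟨1, zero_le_one, 1, fun x => by simp⟩

lemma PBd.poly (q : Polynomial ℝ) : PBd (fun x => q.eval x) := by
  induction q using Polynomial.induction_on with
  | C a => simpa using PBd.const a
  | add p q hp hq => simpa using hp.add hq
  | monomial n a h =>
    have := h.mul PBd.idd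
    refine (funext fun x => ?_ : (fun x => _) = _) ▸ this
    simp; ring

lemma PBd.of_poly {f : ℝ → ℝ} (hf : PolyBounded f) : PBd f := by
  obtain ⟨C, hC, c, hc, h⟩ := hf
  refine ⟨2 * C, by positivity, c, fun x => (h x).trans ?_⟩
  have h1 : |x| ^ c ≤ (1 + |x|) ^ c := by gcongr; linarith
  have h2 : (1:ℝ) ≤ (1 + |x|) ^ c := one_le_pow₀ (by linarith [abs_nonneg x])
  nlinarith

/-- measurable with polynomial growth -/
def PM (f : ℝ → ℝ) : Prop := Measurable f ∧ PBd f

lemma PM.poly (q : Polynomial ℝ) : PM (fun x => q.eval x) :=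
  ⟨q.continuous.measurable, PBd.poly q⟩

lemma PM.mul {f g : ℝ → ℝ} (hf : PM f) (hg : PM g) : PM (fun x => f x * g x) :=
  ⟨hf.1.mul hg.1, hf.2.mul hg.2⟩

/-! All moments class -/

def AllLp {Ω : Type*} [MeasurableSpace Ω] (μ : Measure Ω) (f : Ω → ℝ) : Prop :=
  ∀ p : ℕ, MemLp f p μ

section AllLp
variable {Ω : Type*} [MeasurableSpace Ω] {μ : Measure Ω}

lemma AllLp.mul {f g : Ω → ℝ} (hf : AllLp μ f) (hg : AllLp μ g) :
    AllLp μ (fun x => f x * g x) := by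
  intro p
  have h : ENNReal.HolderTriple ((2 * p : ℕ) : ℝ≥0∞) ((2 * p : ℕ) : ℝ≥0∞) (p : ℝ≥0∞) := by
    constructor
    push_cast
    rw [ENNReal.mul_inv (by simp) (by simp), ← add_mul, ENNReal.inv_two_add_inv_two, one_mul]
  exact MemLp.mul' (hg (2 * p)) (hf (2 * p))

lemma AllLp.add {f g : Ω → ℝ} (hf : AllLp μ f) (hg : AllLp μ g) :
    AllLp μ (fun x => f x + g x) := fun p => (hf p).add (hg p)

lemma AllLp.const [IsFiniteMeasure μ] (a : ℝ) : AllLp μ (fun _ => a) := fun _ => memLp_const a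

lemma AllLp.pow [IsFiniteMeasure μ] {f : Ω → ℝ} (hf : AllLp μ f) (n : ℕ) :
    AllLp μ (fun x => f x ^ n) := by
  induction n with
  | zero => simpa using AllLp.const 1
  | succ n ih => simpa [pow_succ] using ih.mul hf

lemma AllLp.sum {ι : Type*} (s : Finset ι) {f : ι → Ω → ℝ} (hf : ∀ i, AllLp μ (f i)) :
    AllLp μ (fun x => ∑ i ∈ s, f i x) := fun p => memLp_finsetSum s (fun i _ => hf i p)

lemma AllLp.prod [IsFiniteMeasure μ] {ι : Type*} (s : Finset ι) {f : ι → Ω → ℝ}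
    (hf : ∀ i, AllLp μ (f i)) : AllLp μ (fun x => ∏ i ∈ s, f i x) := by
  classical
  induction s using Finset.induction_on with
  | empty => simpa using AllLp.const 1
  | insert a s ha ih => simpa [Finset.prod_insert ha] using (hf a).mul ih

lemma AllLp.abs {f : Ω → ℝ} (hf : AllLp μ f) : AllLp μ (fun x => |f x|) := fun p => (hf p).abs

lemma AllLp.comp_pm [IsFiniteMeasure μ] {f : Ω → ℝ} (hf : AllLp μ f) {φ : ℝ → ℝ} (hφ : PM φ) :
    AllLp μ (fun x => φ (f x)) := by
  obtain ⟨hm, C, hC, c, hb⟩ := hφ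
  intro p
  have h1 : AllLp μ (fun x => C * (1 + |f x|) ^ c) :=
    (AllLp.const C).mul (((AllLp.const 1).add hf.abs).pow c)
  refine (h1 p).mono' ?_ (ae_of_all _ fun x => ?_)
  · exact (hm.comp_aemeasurable (hf 0).1.aemeasurable).aestronglyMeasurable
  · simpa using hb (f x)

lemma AllLp.integrable {f : Ω → ℝ} (hf : AllLp μ f) : Integrable f μ := by
  have := hf 1
  rwa [Nat.cast_one, memLp_one_iff_integrable] at this

lemma AllLp.comp_mp {Ω' : Type*} [MeasurableSpace Ω'] {ν : Measure Ω'} {f : Ω → ℝ}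
    (hf : AllLp μ f) {g : Ω' → Ω} (hg : MeasurePreserving g ν μ) :
    AllLp ν (fun x => f (g x)) := fun p => (hf p).comp_measurePreserving hg

end AllLp

lemma allLp_gauss (m : ℝ) (v : ℝ≥0) : AllLp (gaussianReal m v) (fun x => x) :=
  fun p => memLp_id_gaussianReal' p (by simp)

/-! Weighted smoothing -/

def Fq (q : Polynomial ℝ) (v : ℝ≥0) (φ : ℝ → ℝ) (t : ℝ) : ℝ :=
  ∫ y, q.eval y * φ (y + t) ∂ gaussianReal 0 v

lemma integrable_pdf {m : ℝ} {v : ℝ≥0} (hv : v ≠ 0) {f : ℝ → ℝ}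
    (hf : Integrable f (gaussianReal m v)) : Integrable (fun x => gaussianPDFReal m v x * f x) := by
  rw [gaussianReal_of_var_ne_zero _ hv,
    integrable_withDensity_iff_integrable_smul' (measurable_gaussianPDF _ _)
      (ae_of_all _ fun _ => gaussianPDF_lt_top)] at hf
  simpa using hf

lemma Fq_eq {q : Polynomial ℝ} {v : ℝ≥0} (hv : v ≠ 0) (φ : ℝ → ℝ) (t : ℝ) :
    Fq q v φ t = ∫ u, gaussianPDFReal 0 v (u - t) * (q.eval (u - t) * φ u) := by
  unfold Fq
  rw [integral_gaussianReal_eq_integral_smul hv]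
  rw [← integral_add_right_eq_self
    (fun u => gaussianPDFReal 0 v (u - t) * (q.eval (u - t) * φ u)) t]
  simp

lemma pdf_deriv {v : ℝ≥0} (hv : v ≠ 0) (x : ℝ) :
    HasDerivAt (gaussianPDFReal 0 v) (- (x / v) * gaussianPDFReal 0 v x) x := by
  have hv' : (v : ℝ) ≠ 0 := by simpa using hv
  rw [gaussianPDFReal_def]
  have h1 : HasDerivAt (fun x : ℝ => -(x - 0) ^ 2 / (2 * v)) (-(x / v)) x := by
    have := ((((hasDerivAt_id x).sub_const 0).pow 2).neg.div_const (2 * (v:ℝ)))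
    refine this.congr_deriv ?_
    simp; field_simp
  refine (h1.exp.const_mul _).congr_deriv ?_
  ring

lemma pdf_bound {v : ℝ≥0} (hv : v ≠ 0) (t₀ : ℝ) : ∃ K : ℝ, 0 ≤ K ∧ ∀ t u : ℝ, |t - t₀| ≤ 1 →
    gaussianPDFReal 0 v (u - t) ≤ K * gaussianPDFReal t₀ (2 * v) u := by
  have hv' : (0 : ℝ) < v := by positivity
  set A := (√(2 * Real.pi * v))⁻¹
  set B := (√(2 * Real.pi * (2 * v : ℝ≥0)))⁻¹ with hB
  have hBpos : 0 < B := by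
    rw [hB]; push_cast; positivity
  refine ⟨A * B⁻¹ * Real.exp (1 / (2 * v)), by positivity, fun t u h => ?_⟩
  have : gaussianPDFReal 0 v (u - t) = A * Real.exp (-(u - t - 0) ^ 2 / (2 * v)) := rfl
  rw [this]
  have : gaussianPDFReal t₀ (2 * v) u = B * Real.exp (-(u - t₀) ^ 2 / (2 * (2 * v : ℝ≥0))) := rfl
  rw [this]
  calc A * Real.exp (-(u - t - 0) ^ 2 / (2 * v))
      ≤ A * Real.exp (1 / (2 * v) + -(u - t₀) ^ 2 / (2 * (2 * v : ℝ≥0))) := by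
        gcongr
        push_cast
        have h2 := abs_le.1 h
        rw [show 1 / (2 * (v:ℝ)) + -(u - t₀) ^ 2 / (2 * (2 * v)) = (1 - (u - t₀)^2 / 2) / (2 * v) by
          field_simp; ring]
        gcongr
        nlinarith [sq_nonneg (u - t₀ - 2 * (t - t₀))]
    _ = _ := by rw [Real.exp_add]; field_simp

lemma Fq_hasDeriv (q : Polynomial ℝ) {v : ℝ≥0} (hv : v ≠ 0) {φ : ℝ → ℝ} (hφ : PM φ) (t₀ : ℝ) :
    HasDerivAt (Fq q v φ)
      (Fq (Polynomial.C (v : ℝ)⁻¹ * Polynomial.X * q - Polynomial.derivative q) v φ t₀) t₀ := by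
  have e : Fq q v φ = fun t => ∫ u, gaussianPDFReal 0 v (u - t) * (q.eval (u - t) * φ u) :=
    funext fun t => Fq_eq hv φ t
  rw [e, Fq_eq hv]
  set Q := Polynomial.C (v : ℝ)⁻¹ * Polynomial.X * q - Polynomial.derivative q with hQ
  obtain ⟨K, hK, hKb⟩ := pdf_bound hv t₀
  obtain ⟨C, hC, c, hQb⟩ := PBd.poly Q
  have h2v : 2 * v ≠ 0 := by simpa using hv
  have hmeas : ∀ (R : Polynomial ℝ) (t : ℝ), AEStronglyMeasurable
      (fun u => gaussianPDFReal 0 v (u - t) * (R.eval (u - t) * φ u)) volume := by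
    intro R t
    apply Measurable.aestronglyMeasurable
    have h1 := (measurable_gaussianPDFReal 0 v).comp (measurable_id.sub_const t)
    have h2 := R.continuous.measurable.comp (measurable_id.sub_const t)
    exact h1.mul (h2.mul hφ.1)
  have hbound : Integrable (fun u => gaussianPDFReal t₀ (2 * v) u *
      (K * (C * (2 + |u - t₀|) ^ c * |φ u|))) := by
    apply integrable_pdf h2v
    apply AllLp.integrable
    have hi := allLp_gauss t₀ (2 * v)
    refine (AllLp.const K).mul (((AllLp.const C).mul (((AllLp.const 2).add ?_).pow c)).mul
      (hi.comp_pm hφ).abs)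
    simpa [sub_eq_add_neg] using (hi.add (AllLp.const (-t₀))).abs
  refine (hasDerivAt_integral_of_dominated_loc_of_deriv_le
    (F' := fun t u => gaussianPDFReal 0 v (u - t) * (Q.eval (u - t) * φ u))
    (Metric.ball_mem_nhds t₀ one_pos) (Filter.Eventually.of_forall fun t => hmeas q t) ?_ (hmeas Q t₀)
    (ae_of_all _ fun u t ht => ?_) hbound (ae_of_all _ fun u t ht => ?_)).2
  · have : Integrable (fun y => q.eval y * φ (y + t₀)) (gaussianReal 0 v) := by
      apply AllLp.integrable
      have hi := allLp_gauss 0 v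
      exact (hi.comp_pm (PM.poly q)).mul ((hi.add (AllLp.const t₀)).comp_pm hφ)
    have := (integrable_pdf hv this).comp_sub_right t₀
    simpa using this
  · have ht' : |t - t₀| ≤ 1 := by
      have := Metric.mem_ball.1 ht
      rw [Real.dist_eq] at this
      exact this.le
    have h3 : |u - t| ≤ 1 + |u - t₀| := by
      have : u - t = -(t - t₀) + (u - t₀) := by ring
      rw [this]
      refine (abs_add_le _ _).trans ?_
      rw [abs_neg]; linarith
    rw [Real.norm_eq_abs, abs_mul, abs_mul, abs_of_nonneg (gaussianPDFReal_nonneg _ _ _)]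
    calc _ ≤ (K * gaussianPDFReal t₀ (2 * v) u) * ((C * (1 + |u - t|) ^ c) * |φ u|) := by
          have hp := gaussianPDFReal_nonneg t₀ (2 * v) u
          gcongr
          · exact hKb t u ht'
          · exact hQb _
      _ ≤ (K * gaussianPDFReal t₀ (2 * v) u) * ((C * (2 + |u - t₀|) ^ c) * |φ u|) := by
          have := gaussianPDFReal_nonneg t₀ (2 * v) u
          have : 1 + |u - t| ≤ 2 + |u - t₀| := by linarith
          gcongr
      _ = _ := by ring
  · have hs : HasDerivAt (fun t : ℝ => u - t) (-1) t := by
      simpa using (hasDerivAt_id t).const_sub u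
    have h1 := (pdf_deriv hv (u - t)).comp t hs
    have h2 := (q.hasDerivAt (u - t)).comp t hs
    have := h1.mul (h2.mul_const (φ u))
    refine this.congr_deriv ?_
    simp [hQ]
    ring

lemma Fq_pm (q : Polynomial ℝ) {v : ℝ≥0} (hv : v ≠ 0) {φ : ℝ → ℝ} (hφ : PM φ) :
    PM (Fq q v φ) := by
  refine ⟨(continuous_iff_continuousAt.2 fun t =>
    (Fq_hasDeriv q hv hφ t).continuousAt).measurable, ?_⟩
  obtain ⟨hm, C, hC, c, hb⟩ := hφ
  have hi := allLp_gauss 0 v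
  have hI : Integrable (fun y => |q.eval y| * (1 + |y|) ^ c) (gaussianReal 0 v) :=
    ((hi.comp_pm (PM.poly q)).abs.mul (((AllLp.const 1).add hi.abs).pow c)).integrable
  refine ⟨(∫ y, |q.eval y| * (1 + |y|) ^ c ∂gaussianReal 0 v) * C, ?_, c, fun t => ?_⟩
  · have : 0 ≤ ∫ y, |q.eval y| * (1 + |y|) ^ c ∂gaussianReal 0 v :=
      integral_nonneg fun y => by positivity
    positivity
  · unfold Fq
    rw [← Real.norm_eq_abs, mul_assoc, ← integral_mul_const]
    refine norm_integral_le_of_norm_le (hI.mul_const _) (ae_of_all _ fun y => ?_)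
    rw [Real.norm_eq_abs, abs_mul]
    have h1 : 1 + |y + t| ≤ (1 + |y|) * (1 + |t|) := by
      nlinarith [abs_add_le y t, mul_nonneg (abs_nonneg y) (abs_nonneg t)]
    calc |q.eval y| * |φ (y + t)| ≤ |q.eval y| * (C * ((1 + |y|) * (1 + |t|)) ^ c) := by
          gcongr
          refine (hb _).trans ?_
          gcongr
      _ = _ := by rw [mul_pow]; ring

/-- Hermite type polynomials -/
def qs (v : ℝ≥0) : ℕ → Polynomial ℝ
  | 0 => 1
  | j + 1 => Polynomial.C (v : ℝ)⁻¹ * Polynomial.X * qs v j - Polynomial.derivative (qs v j)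

lemma iteratedDeriv_Fq {v : ℝ≥0} (hv : v ≠ 0) {φ : ℝ → ℝ} (hφ : PM φ) (j : ℕ) :
    iteratedDeriv j (Fq 1 v φ) = Fq (qs v j) v φ := by
  induction j with
  | zero => simp [qs]
  | succ j ih =>
    rw [iteratedDeriv_succ, ih]
    exact funext fun t => (Fq_hasDeriv _ hv hφ t).deriv

lemma Fq_X {v : ℝ≥0} (hv : v ≠ 0) {φ : ℝ → ℝ} (hφ : PM φ) (t : ℝ) :
    Fq Polynomial.X v φ t = v * deriv (Fq 1 v φ) t := by
  have hv' : (v : ℝ) ≠ 0 := by simpa using hv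
  rw [(Fq_hasDeriv 1 hv hφ t).deriv]
  unfold Fq
  rw [← integral_const_mul]
  congr 1; ext y
  simp
  field_simp

lemma Fq_comm (q : Polynomial ℝ) (s v : ℝ≥0) {φ : ℝ → ℝ} (hφ : PM φ) (t : ℝ) :
    Fq 1 s (Fq q v φ) t = Fq q v (Fq 1 s φ) t := by
  unfold Fq
  simp only [Polynomial.eval_one, one_mul, ← integral_const_mul]
  rw [integral_integral_swap]
  · congr 1; ext y; congr 1; ext w
    rw [show y + (w + t) = w + (y + t) by ring]
  · apply AllLp.integrable
    have h1 : AllLp ((gaussianReal 0 s).prod (gaussianReal 0 v)) (fun z => z.1) :=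
      (allLp_gauss 0 s).comp_mp measurePreserving_fst
    have h2 : AllLp ((gaussianReal 0 s).prod (gaussianReal 0 v)) (fun z => z.2) :=
      (allLp_gauss 0 v).comp_mp measurePreserving_snd
    exact (h2.comp_pm (PM.poly q)).mul ((h2.add (h1.add (AllLp.const t))).comp_pm hφ)

lemma Fq_semi (s v : ℝ≥0) {φ : ℝ → ℝ} (hφ : PM φ) :
    Fq 1 s (Fq 1 v φ) = Fq 1 (v + s) φ := by
  ext t
  unfold Fq
  simp only [Polynomial.eval_one, one_mul]
  have := gaussianReal_conv_gaussianReal (m₁ := 0) (m₂ := 0) (v₁ := s) (v₂ := v)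
  rw [add_zero] at this
  rw [add_comm v s, ← this, integral_conv]
  · congr 1; ext x; congr 1; ext y
    congr 1; ring
  · rw [this]
    exact (((allLp_gauss 0 (s + v)).add (AllLp.const t)).comp_pm hφ).integrable

lemma step_pos {s v : ℝ≥0} (hs : s ≠ 0) (hv : v ≠ 0) {φ : ℝ → ℝ} (hφ : PM φ) (j e : ℕ)
    (he : e ≤ 1) (t : ℝ) :
    ∫ w, w ^ e * iteratedDeriv j (Fq 1 v φ) (w + t) ∂gaussianReal 0 s =
      s ^ e * Fq 1 s (iteratedDeriv (j + e) (Fq 1 v φ)) t := by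
  rw [iteratedDeriv_Fq hv hφ, iteratedDeriv_Fq hv hφ]
  interval_cases e
  · simp [Fq]
  · have h := Fq_X hs (Fq_pm (qs v j) hv hφ) t
    have e1 : Fq 1 s (Fq (qs v j) v φ) = Fq (qs v j) v (Fq 1 s φ) :=
      funext fun t => Fq_comm _ _ _ hφ t
    rw [e1, (Fq_hasDeriv _ hv (Fq_pm 1 hs hφ) t).deriv, ← Fq_comm _ _ _ hφ] at h
    simp only [pow_one]
    rw [show Fq Polynomial.X s (Fq (qs v j) v φ) t
      = ∫ w, w * Fq (qs v j) v φ (w + t) ∂gaussianReal 0 s by simp [Fq]] at h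
    exact h

lemma step_gen {s v : ℝ≥0} (hs : s ≠ 0) {φ : ℝ → ℝ} (hφ : PM φ) (j e : ℕ)
    (he : e ≤ 1) (hvj : v ≠ 0 ∨ j = 0) (t : ℝ) :
    ∫ w, w ^ e * iteratedDeriv j (Fq 1 v φ) (w + t) ∂gaussianReal 0 s =
      s ^ e * iteratedDeriv (j + e) (Fq 1 (v + s) φ) t := by
  by_cases hv : v = 0
  · have hj : j = 0 := by tauto
    subst hv hj
    have h0 : Fq 1 0 φ = φ := by ext t; simp [Fq, gaussianReal_zero_var]
    rw [h0]
    interval_cases e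
    · simp [Fq]
    · have := Fq_X hs hφ t
      simp [Fq] at this
      simpa [Fq] using this
  · rw [step_pos hs hv hφ j e he, iteratedDeriv_Fq hv hφ, Fq_comm _ _ _ hφ,
      ← iteratedDeriv_Fq hv (Fq_pm 1 hs hφ), ← Fq_semi s v hφ,
      show Fq 1 v (Fq 1 s φ) = Fq 1 s (Fq 1 v φ) from funext fun t => (Fq_comm _ _ _ hφ t).symm]

lemma allLp_pi {m : ℕ} (s : ℝ≥0) (i : Fin m) :
    AllLp (Measure.pi fun _ : Fin m => gaussianReal 0 s) (fun w => w i) :=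
  (allLp_gauss 0 s).comp_mp (measurePreserving_eval (fun _ : Fin m => gaussianReal 0 s) i)

lemma allLp_H {m : ℕ} (s : ℝ≥0) {φ : ℝ → ℝ} (hφ : PM φ) (e : Fin m → ℕ) (t : ℝ) :
    AllLp (Measure.pi fun _ : Fin m => gaussianReal 0 s)
      (fun w => (∏ i, w i ^ e i) * φ (∑ i, w i + t)) :=
  (AllLp.prod _ fun i => (allLp_pi s i).pow (e i)).mul
    (((AllLp.sum _ fun i => allLp_pi s i).add (AllLp.const t)).comp_pm hφ)

lemma pi_formula {s : ℝ≥0} (hs : s ≠ 0) {φ : ℝ → ℝ} (hφ : PM φ) (m : ℕ) :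
    ∀ (e : Fin m → ℕ), (∀ i, e i ≤ 1) → ∀ t : ℝ,
    ∫ w, (∏ i, w i ^ e i) * φ (∑ i, w i + t) ∂(Measure.pi fun _ : Fin m => gaussianReal 0 s) =
      s ^ (∑ i, e i) * iteratedDeriv (∑ i, e i) (Fq 1 (m * s) φ) t := by
  induction m with
  | zero =>
    intro e he t
    simp [Fq, gaussianReal_zero_var]
  | succ m ih =>
    intro e he t
    have mp := measurePreserving_piFinSuccAbove (fun _ : Fin (m + 1) => gaussianReal 0 s) 0
    have mps := mp.symm
    rw [← mps.integral_comp' (g := fun w : Fin (m + 1) → ℝ =>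
      (∏ i, w i ^ e i) * φ (∑ i, w i + t))]
    have hint := ((allLp_H s hφ e t).comp_mp mps).integrable
    rw [integral_prod _ hint]
    have key : ∀ x : ℝ, ∫ y, (∏ i, ((MeasurableEquiv.piFinSuccAbove (fun _ : Fin (m+1) => ℝ) 0).symm
        (x, y)) i ^ e i) * φ (∑ i, ((MeasurableEquiv.piFinSuccAbove (fun _ : Fin (m+1) => ℝ) 0).symm
        (x, y)) i + t) ∂(Measure.pi fun _ : Fin m => gaussianReal 0 s)
        = s ^ (∑ i : Fin m, e i.succ) * (x ^ e 0 *
          iteratedDeriv (∑ i : Fin m, e i.succ) (Fq 1 (m * s) φ) (x + t)) := by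
      intro x
      have := ih (fun i => e i.succ) (fun i => he _) (x + t)
      rw [mul_left_comm, ← this, ← integral_const_mul]
      congr 1; ext y
      simp [MeasurableEquiv.piFinSuccAbove_symm_apply, Fin.insertNthEquiv, Fin.prod_univ_succ, Fin.sum_univ_succ]
      rw [mul_assoc]
      congr 3
      ring
    refine (integral_congr_ae (ae_of_all _ key)).trans ?_
    rw [integral_const_mul, step_gen hs hφ _ _ (he 0)]
    · rw [Fin.sum_univ_succ, ← mul_assoc, ← pow_add, add_comm (e 0)]
      congr 3
      push_cast; ring
    · rcases Nat.eq_zero_or_pos m with h | h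
      · right; subst h; simp
      · left; positivity

lemma second_moment (s : ℝ≥0) {e : ℕ} (he : e ≤ 1) :
    ∫ w, (w ^ e) ^ 2 ∂gaussianReal 0 s = (s : ℝ) ^ e := by
  interval_cases e
  · simp
  · have h := variance_id_gaussianReal (μ := 0) (v := s)
    rw [variance_of_integral_eq_zero aemeasurable_id (by simp)] at h
    simpa using h

lemma cs_bound {Ω : Type*} [MeasurableSpace Ω] {μ : Measure Ω} {T g : Ω → ℝ}
    (hT : AllLp μ T) (hg : AllLp μ g) {A B : ℝ} (hA : 0 < A) (h1 : ∫ θ, g θ ^ 2 ∂μ = A)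
    (h2 : ∫ θ, T θ * g θ ∂μ = A * B) : A * B ^ 2 ≤ ∫ θ, T θ ^ 2 ∂μ := by
  have h0 : 0 ≤ ∫ θ, (T θ - B * g θ) ^ 2 ∂μ := integral_nonneg fun θ => sq_nonneg _
  have i1 : Integrable (fun θ => T θ ^ 2) μ := by simpa [sq] using (hT.mul hT).integrable
  have i2 : Integrable (fun θ => g θ ^ 2) μ := by simpa [sq] using (hg.mul hg).integrable
  have i3 : Integrable (fun θ => T θ * g θ) μ := (hT.mul hg).integrable
  have : ∫ θ, (T θ - B * g θ) ^ 2 ∂μ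
      = ∫ θ, T θ ^ 2 ∂μ - 2 * B * ∫ θ, T θ * g θ ∂μ + B ^ 2 * ∫ θ, g θ ^ 2 ∂μ := by
    rw [← integral_const_mul, ← integral_const_mul, ← integral_sub i1 (i3.const_mul _),
      ← integral_add (f := fun a => T a ^ 2 - 2 * B * (T a * g a)) (i1.sub (i3.const_mul _))
        (i2.const_mul _)]
    congr 1; ext θ; ring
  rw [this, h1, h2] at h0
  nlinarith

lemma bsign_cases (b : Bool) : bsign b = 1 ∨ bsign b = -1 := by cases b <;> simp [bsign]

instance (n : ℕ) : IsProbabilityMeasure (initMeasure n) := by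
  unfold initMeasure; infer_instance

lemma mp_flip (n : ℕ) (x : Fin n → Bool) :
    MeasurePreserving (fun θ : (Fin n → ℝ) × ℝ => ((fun i => θ.1 i * bsign (x i)), θ.2))
      (initMeasure n) (initMeasure n) := by
  have h1 : MeasurePreserving (fun w : Fin n → ℝ => fun i => w i * bsign (x i))
      (Measure.pi fun _ : Fin n => gaussianReal 0 (n : ℝ≥0)⁻¹)
      (Measure.pi fun _ : Fin n => gaussianReal 0 (n : ℝ≥0)⁻¹) := by
    refine measurePreserving_pi (f := fun i y => y * bsign (x i)) _ _ fun i => ⟨by fun_prop, ?_⟩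
    rcases bsign_cases (x i) with h | h
    · simp [h]
    · simp [h, gaussianReal_map_neg]
  exact h1.prod (MeasurePreserving.id _)

lemma init_w (n : ℕ) (i : Fin n) : AllLp (initMeasure n) (fun θ => θ.1 i) :=
  (allLp_pi _ i).comp_mp measurePreserving_fst

lemma init_b (n : ℕ) : AllLp (initMeasure n) (fun θ => θ.2) :=
  (allLp_gauss 0 _).comp_mp measurePreserving_snd

lemma init_G (n : ℕ) (e : Fin n → ℕ) (e' : ℕ) :
    AllLp (initMeasure n) (fun θ => (∏ i, θ.1 i ^ e i) * θ.2 ^ e') :=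
  (AllLp.prod _ fun i => (init_w n i).pow (e i)).mul ((init_b n).pow e')

lemma init_H (n : ℕ) (e : Fin n → ℕ) (e' : ℕ) {σ : ℝ → ℝ} (hσ : PM σ) :
    AllLp (initMeasure n) (fun θ => ((∏ i, θ.1 i ^ e i) * θ.2 ^ e') * σ (∑ i, θ.1 i + θ.2)) :=
  (init_G n e e').mul (((AllLp.sum _ fun i => init_w n i).add (init_b n)).comp_pm hσ)

lemma init_formula {n : ℕ} (hn : n ≠ 0) (e : Fin n → ℕ) (he : ∀ i, e i ≤ 1) (e' : ℕ) (he' : e' ≤ 1)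
    {σ : ℝ → ℝ} (hσ : PM σ) :
    ∫ θ, ((∏ i, θ.1 i ^ e i) * θ.2 ^ e') * σ (∑ i, θ.1 i + θ.2) ∂initMeasure n =
      (((n : ℝ≥0)⁻¹ : ℝ≥0) : ℝ) ^ (∑ i, e i + e') *
        Fq 1 (n : ℝ≥0)⁻¹ (iteratedDeriv (∑ i, e i + e') (Fq 1 1 σ)) 0 := by
  have hint := (init_H n e e' hσ).integrable
  have hs : (n : ℝ≥0)⁻¹ ≠ 0 := by simpa using hn
  unfold initMeasure at hint ⊢
  rw [integral_prod_symm _ hint]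
  have key : ∀ b : ℝ, ∫ w : Fin n → ℝ, ((∏ i, w i ^ e i) * b ^ e') * σ (∑ i, w i + b)
      ∂(Measure.pi fun _ : Fin n => gaussianReal 0 (n : ℝ≥0)⁻¹) =
      (((n : ℝ≥0)⁻¹ : ℝ≥0) : ℝ) ^ (∑ i, e i) *
        (b ^ e' * iteratedDeriv (∑ i, e i) (Fq 1 1 σ) (b + 0)) := by
    intro b
    have := pi_formula hs hσ n e he b
    rw [mul_inv_cancel₀ (by simpa using hn)] at this
    rw [add_zero, mul_left_comm, ← this, ← integral_const_mul]
    congr 1; ext w; ring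
  refine (integral_congr_ae (ae_of_all _ key)).trans ?_
  rw [integral_const_mul, step_pos hs one_ne_zero hσ _ _ he', pow_add, mul_assoc]

lemma inal_bound {n k : ℕ} (hn : n ≠ 0) (hk : k ≤ n) (e' : ℕ) (he' : e' ≤ 1)
    {σ : ℝ → ℝ} (hσ : PM σ) :
    (((n : ℝ≥0)⁻¹ : ℝ≥0) : ℝ) ^ (k + e') *
        (Fq 1 (n : ℝ≥0)⁻¹ (iteratedDeriv (k + e') (Fq 1 1 σ)) 0) ^ 2
      ≤ INAL n (monomial n k) σ := by
  set e : Fin n → ℕ := fun i => if (i : ℕ) < k then 1 else 0 with he_def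
  have he : ∀ i, e i ≤ 1 := fun i => by simp only [he_def]; split_ifs <;> simp
  have hsum : ∑ i, e i = k := by
    simp only [he_def, Finset.sum_boole]
    simp [Fin.card_filter_val_lt, hk]
  have hmon : ∀ x, monomial n k x = ∏ i, bsign (x i) ^ e i := by
    intro x
    simp only [monomial, he_def, Finset.prod_filter]
    refine Finset.prod_congr rfl fun i _ => ?_
    split_ifs <;> simp
  have hs : (n : ℝ≥0)⁻¹ ≠ 0 := by simpa using hn
  have hterm : ∀ x : Fin n → Bool, AllLp (initMeasure n)
      (fun θ => monomial n k x * σ (∑ i, θ.1 i * bsign (x i) + θ.2)) := fun x =>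
    (AllLp.const _).mul (((AllLp.sum _ fun i =>
      (init_w n i).mul (AllLp.const (bsign (x i)))).add (init_b n)).comp_pm hσ)
  have hT : AllLp (initMeasure n)
      (fun θ => bExp n fun x => monomial n k x * σ (∑ i, θ.1 i * bsign (x i) + θ.2)) := by
    unfold bExp
    simp only [div_eq_mul_inv]
    exact (AllLp.sum _ fun x => hterm x).mul (AllLp.const _)
  have hform := init_formula hn e he e' he' hσ
  rw [hsum] at hform
  unfold INAL
  refine cs_bound hT (init_G n e e') (by positivity) ?_ ?_
  · unfold initMeasure
    simp only [mul_pow, ← Finset.prod_pow]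
    rw [integral_prod_mul (fun w : Fin n → ℝ => ∏ i, (w i ^ e i) ^ 2) (fun b : ℝ => (b ^ e') ^ 2),
      second_moment _ he',
      integral_fintype_prod_eq_prod (fun i (y : ℝ) => (y ^ e i) ^ 2)]
    simp only [second_moment _ (he _)]
    rw [Finset.prod_pow_eq_pow_sum, hsum, pow_add]
  · rw [← hform]
    have hx : ∀ x : Fin n → Bool, ∫ θ, (monomial n k x * σ (∑ i, θ.1 i * bsign (x i) + θ.2)) *
        ((∏ i, θ.1 i ^ e i) * θ.2 ^ e') ∂initMeasure n =
        ∫ θ, ((∏ i, θ.1 i ^ e i) * θ.2 ^ e') * σ (∑ i, θ.1 i + θ.2) ∂initMeasure n := by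
      intro x
      have mp := mp_flip n x
      have hm := (init_H n e e' hσ 0).1
      conv_rhs => rw [← mp.map_eq]
      rw [integral_map mp.aemeasurable (by rw [mp.map_eq]; exact hm)]
      congr 1; ext θ
      simp only [mul_pow, Finset.prod_mul_distrib, hmon]
      ring
    have : ∀ θ : (Fin n → ℝ) × ℝ,
        (bExp n fun x => monomial n k x * σ (∑ i, θ.1 i * bsign (x i) + θ.2)) *
          ((∏ i, θ.1 i ^ e i) * θ.2 ^ e') =
        (2 ^ n)⁻¹ * ∑ x : Fin n → Bool, (monomial n k x * σ (∑ i, θ.1 i * bsign (x i) + θ.2)) *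
          ((∏ i, θ.1 i ^ e i) * θ.2 ^ e') := by
      intro θ
      rw [bExp, ← Finset.sum_mul]; ring
    simp only [this]
    rw [integral_const_mul, integral_finsetSum _ fun x _ => ((hterm x).mul (init_G n e e')).integrable]
    simp only [hx]
    simp

lemma Fq_tendsto {χ : ℝ → ℝ} (hχ : PM χ) (hc : Continuous χ) :
    Tendsto (fun n : ℕ => Fq 1 (n : ℝ≥0)⁻¹ χ 0) atTop (nhds (χ 0)) := by
  obtain ⟨hm, C, hC, c, hb⟩ := hχ
  have hscale : ∀ n : ℕ, Fq 1 (n : ℝ≥0)⁻¹ χ 0 = ∫ y, χ ((√(n : ℝ))⁻¹ * y) ∂gaussianReal 0 1 := by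
    intro n
    have h := gaussianReal_map_const_mul (μ := 0) (v := 1) ((√(n : ℝ))⁻¹)
    have hv : NNReal.mk (((√(n : ℝ))⁻¹) ^ 2) (sq_nonneg _) * 1 = (n : ℝ≥0)⁻¹ := by
      rw [mul_one]; apply NNReal.coe_injective; simp
    rw [mul_zero] at h
    unfold Fq
    simp only [Polynomial.eval_one, one_mul, add_zero]
    rw [← hv, ← h, integral_map (by fun_prop) hm.aestronglyMeasurable]
  simp only [hscale]
  have hlim : χ 0 = ∫ y : ℝ, χ 0 ∂gaussianReal 0 1 := by simp
  rw [hlim]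
  refine tendsto_integral_filter_of_dominated_convergence (fun y => C * (1 + |y|) ^ c) ?_ ?_ ?_ ?_
  · exact Filter.Eventually.of_forall fun n =>
      (hm.comp (measurable_const_mul _)).aestronglyMeasurable
  · filter_upwards [eventually_ge_atTop 1] with n hn
    refine ae_of_all _ fun y => (hb _).trans ?_
    have h1 : (√(n : ℝ))⁻¹ ≤ 1 := inv_le_one_of_one_le₀ (Real.one_le_sqrt.2 (by exact_mod_cast hn))
    have h0 : 0 ≤ (√(n : ℝ))⁻¹ := by positivity
    have h2 : |(√(n : ℝ))⁻¹ * y| ≤ |y| := by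
      rw [abs_mul, abs_of_nonneg h0]
      exact mul_le_of_le_one_left (abs_nonneg _) h1
    exact mul_le_mul_of_nonneg_left (pow_le_pow_left₀ (by positivity) (by linarith) c) hC
  · exact ((AllLp.const C).mul (((AllLp.const 1).add (allLp_gauss 0 1).abs).pow c)).integrable
  · refine ae_of_all _ fun y => ?_
    have h1 : Tendsto (fun n : ℕ => (√(n : ℝ))⁻¹ * y) atTop (nhds 0) := by
      have : Tendsto (fun n : ℕ => (√(n : ℝ))⁻¹) atTop (nhds 0) :=
        tendsto_inv_atTop_zero.comp (Real.tendsto_sqrt_atTop.comp tendsto_natCast_atTop_atTop)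
      simpa using this.mul_const y
    exact (hc.tendsto 0).comp h1

/-- Every expressive activation is 1-strongly correlating: for every fixed `k`,
`INAL(M_k, σ) = Ω(n^{-(k+1)})` as `n → ∞`. -/
theorem expressive_is_one_strongly_correlating
    (σ : ℝ → ℝ) (hσ : Expressive σ) (k : ℕ) :
    (fun n : ℕ => ((n : ℝ) ^ (k + 1))⁻¹) =O[atTop]
      fun n : ℕ => INAL n (monomial n k) σ := by
  have hPM : PM σ := ⟨hσ.1, PBd.of_poly hσ.2.1⟩
  have hg : gsmooth σ 1 = Fq 1 1 σ := by
    ext t; simp [gsmooth, Fq]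
  obtain ⟨e', he', hne⟩ : ∃ e' : ℕ, e' ≤ 1 ∧ iteratedDeriv (k + e') (gsmooth σ 1) 0 ≠ 0 := by
    rcases hσ.2.2 k with h | h
    · exact ⟨0, by simp, h⟩
    · exact ⟨1, le_rfl, h⟩
  rw [hg] at hne
  set χ := iteratedDeriv (k + e') (Fq 1 1 σ) with hχ
  have hχ' : χ = Fq (qs 1 (k + e')) 1 σ := iteratedDeriv_Fq one_ne_zero hPM _
  have hχPM : PM χ := hχ' ▸ Fq_pm _ one_ne_zero hPM
  have hχc : Continuous χ := hχ' ▸ continuous_iff_continuousAt.2 fun t =>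
    (Fq_hasDeriv _ one_ne_zero hPM t).continuousAt
  have hlim := (Fq_tendsto hχPM hχc).pow 2
  have hpos : 0 < χ 0 ^ 2 := by positivity
  have hev := hlim.eventually (lt_mem_nhds (half_lt_self hpos))
  refine IsBigO.of_bound (χ 0 ^ 2 / 2)⁻¹ ?_
  filter_upwards [hev, eventually_ge_atTop (k + 1)] with n h1 hn
  have hb := inal_bound (n := n) (k := k) (by omega) (by omega) e' he' hPM
  rw [← hχ] at hb
  have hn1 : (1 : ℝ) ≤ n := by exact_mod_cast (by omega : 1 ≤ n)
  have hle : ((n : ℝ) ^ (k + 1))⁻¹ ≤ (((n : ℝ≥0)⁻¹ : ℝ≥0) : ℝ) ^ (k + e') := by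
    push_cast
    rw [inv_pow]
    gcongr
  have h2 : ((n : ℝ) ^ (k + 1))⁻¹ * (χ 0 ^ 2 / 2) ≤ INAL n (monomial n k) σ := by
    refine le_trans ?_ hb
    gcongr
  rw [Real.norm_of_nonneg (by positivity), inv_mul_eq_div, le_div_iff₀ (by positivity)]
  exact h2.trans (le_abs_self _)
end
end
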